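/- arXiv:2110.04059 — 13 statements merged into one kernel-verified Lean document; each statement's English description precedes it below -/
import Mathlib

section
/- Let I ⊆ ℝ be an open interval, let p, q, r, q₁, r₁, w : I → ℝ be smooth functions and b : I → ℝ smooth and nonvanishing. Define the operators T y = p·y'' + q·y' + r·y, T₁ y = p·y'' + q₁·y' + r₁·y and A y = b·(y' - w·y) acting on smooth functions y : I → ℝ. If A(T y) = T₁(A y) holds on I for every smooth y : I → ℝ, then the function p·(w' + w²) + q·w + r is constant on I; equivalently, there is a constant λ ∈ ℝ such that every nonvanishing smooth ψ : I → ℝ satisfying ψ' = w·ψ obeys p·ψ'' + q·ψ' + r·ψ = λ·ψ on I. -/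
open Set

/-- Second-order operator `T = pD² + qD + r` acting on smooth functions. -/
noncomputable def secondOrderOp (p q r : ℝ → ℝ) (y : ℝ → ℝ) (z : ℝ) : ℝ :=
  p z * deriv (deriv y) z + q z * deriv y z + r z * y z

/-- First-order operator `A = b(D - w)`. -/
noncomputable def firstOrderOp (b w : ℝ → ℝ) (y : ℝ → ℝ) (z : ℝ) : ℝ :=
  b z * (deriv y z - w z * y z)

/-- A smooth function on an open interval has a smooth primitive there. -/
theorem exists_contDiffOn_primitive_Ioo {a b : ℝ} (hab : a < b) {w : ℝ → ℝ}
    (hw : ContDiffOn ℝ (⊤ : ℕ∞) w (Ioo a b)) :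
    ∃ W : ℝ → ℝ, ContDiffOn ℝ (⊤ : ℕ∞) W (Ioo a b) ∧
      ∀ z ∈ Ioo a b, HasDerivAt W (w z) z := by
  obtain ⟨c, hc⟩ := nonempty_Ioo.2 hab
  have hder : ∀ z ∈ Ioo a b, HasDerivAt (fun u => ∫ t in c..u, w t) (w z) z := by
    intro z hz
    refine intervalIntegral.integral_hasDerivAt_right ?_ ?_ ?_
    · exact (hw.continuousOn.mono (ordConnected_Ioo.uIcc_subset hc hz)).intervalIntegrable
    · exact hw.continuousOn.stronglyMeasurableAtFilter isOpen_Ioo z hz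
    · exact hw.continuousOn.continuousAt (isOpen_Ioo.mem_nhds hz)
  refine ⟨_, (contDiffOn_infty_iff_deriv_of_isOpen isOpen_Ioo).2 ⟨?_, ?_⟩, hder⟩
  · exact fun z hz => (hder z hz).differentiableAt.differentiableWithinAt
  · exact hw.congr fun z hz => (hder z hz).deriv

/-- If `ψ' = wψ` on an open set, then `Tψ = (p(w' + w²) + qw + r)ψ` there. -/
theorem secondOrderOp_eq_mul_of_deriv_eq {s : Set ℝ} (hs : IsOpen s) (p q r : ℝ → ℝ)
    {w ψ : ℝ → ℝ} (hw : DifferentiableOn ℝ w s) (hψ : DifferentiableOn ℝ ψ s)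
    (hψw : ∀ z ∈ s, deriv ψ z = w z * ψ z) {z : ℝ} (hz : z ∈ s) :
    secondOrderOp p q r ψ z
      = (p z * (deriv w z + (w z) ^ 2) + q z * w z + r z) * ψ z := by
  have hs' := hs.mem_nhds hz
  have hdd : deriv (deriv ψ) z = deriv w z * ψ z + w z * deriv ψ z := by
    rw [Filter.EventuallyEq.deriv_eq (Filter.eventually_of_mem hs' hψw)]
    exact deriv_fun_mul (hw.differentiableAt hs') (hψ.differentiableAt hs')
  rw [secondOrderOp, hdd, hψw z hz]
  ring

/-- A second-order operator sends a function vanishing on an open set to one vanishing there. -/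
theorem secondOrderOp_eq_zero_of_eqOn_zero {s : Set ℝ} (hs : IsOpen s) (p q r : ℝ → ℝ)
    {y : ℝ → ℝ} (hy : ∀ z ∈ s, y z = 0) {z : ℝ} (hz : z ∈ s) :
    secondOrderOp p q r y z = 0 := by
  have hd : ∀ x ∈ s, deriv y x = 0 := fun x hx => by
    have : y =ᶠ[nhds x] fun _ => 0 := Filter.eventually_of_mem (hs.mem_nhds hx) hy
    simp [this.deriv_eq]
  have hdd : deriv y =ᶠ[nhds z] fun _ => 0 := Filter.eventually_of_mem (hs.mem_nhds hz) hd
  simp [secondOrderOp, hdd.deriv_eq, hd z hz, hy z hz]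

/-- if `A T = T₁ A` on an open interval, then `p(w' + w²) + q w + r`
is constant there; equivalently there is λ such that any nonvanishing smooth ψ with
ψ' = wψ satisfies `Tψ = λψ`. -/
theorem statement0 (a b : ℝ) (hab : a < b)
    (p q r q₁ r₁ w bf : ℝ → ℝ)
    (hp : ContDiffOn ℝ (⊤ : ℕ∞) p (Ioo a b)) (hq : ContDiffOn ℝ (⊤ : ℕ∞) q (Ioo a b))
    (hr : ContDiffOn ℝ (⊤ : ℕ∞) r (Ioo a b)) (hq₁ : ContDiffOn ℝ (⊤ : ℕ∞) q₁ (Ioo a b))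
    (hr₁ : ContDiffOn ℝ (⊤ : ℕ∞) r₁ (Ioo a b)) (hw : ContDiffOn ℝ (⊤ : ℕ∞) w (Ioo a b))
    (hb : ContDiffOn ℝ (⊤ : ℕ∞) bf (Ioo a b)) (hb0 : ∀ z ∈ Ioo a b, bf z ≠ 0)
    (hinter : ∀ y : ℝ → ℝ, ContDiffOn ℝ (⊤ : ℕ∞) y (Ioo a b) → ∀ z ∈ Ioo a b,
      firstOrderOp bf w (secondOrderOp p q r y) z
        = secondOrderOp p q₁ r₁ (firstOrderOp bf w y) z) :
    ∃ lam : ℝ,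
      (∀ z ∈ Ioo a b, p z * (deriv w z + (w z) ^ 2) + q z * w z + r z = lam) ∧
      (∀ ψ : ℝ → ℝ, ContDiffOn ℝ (⊤ : ℕ∞) ψ (Ioo a b) → (∀ z ∈ Ioo a b, ψ z ≠ 0) →
        (∀ z ∈ Ioo a b, deriv ψ z = w z * ψ z) →
        ∀ z ∈ Ioo a b, secondOrderOp p q r ψ z = lam * ψ z) := by
  obtain ⟨W, hW, hWw⟩ := exists_contDiffOn_primitive_Ioo hab hw
  have hwd : DifferentiableOn ℝ w (Ioo a b) := hw.differentiableOn (by simp)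
  have hφ : ContDiffOn ℝ (⊤ : ℕ∞) (fun z => Real.exp (W z)) (Ioo a b) := hW.exp
  have hφd : DifferentiableOn ℝ (fun z => Real.exp (W z)) (Ioo a b) :=
    hφ.differentiableOn (by simp)
  have hφw : ∀ z ∈ Ioo a b,
      deriv (fun z => Real.exp (W z)) z = w z * Real.exp (W z) := fun z hz => by
    rw [(hWw z hz).exp.deriv, mul_comm]
  set F : ℝ → ℝ := fun z => p z * (deriv w z + (w z) ^ 2) + q z * w z + r z
  have hFd : DifferentiableOn ℝ F (Ioo a b) := by
    have hw' : DifferentiableOn ℝ (deriv w) (Ioo a b) :=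
      ((contDiffOn_infty_iff_deriv_of_isOpen isOpen_Ioo).1 hw).2.differentiableOn (by simp)
    exact (((hp.differentiableOn (by simp)).mul (hw'.add (hwd.pow 2))).add
      ((hq.differentiableOn (by simp)).mul hwd)).add (hr.differentiableOn (by simp))
  have hF0 : ∀ z ∈ Ioo a b, deriv F z = 0 := by
    intro z hz
    have hmem := isOpen_Ioo.mem_nhds hz
    have hT : ∀ x ∈ Ioo a b, secondOrderOp p q r (fun z => Real.exp (W z)) x
        = F x * Real.exp (W x) :=
      fun x hx => secondOrderOp_eq_mul_of_deriv_eq isOpen_Ioo p q r hwd hφd hφw hx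
    have hA := hinter _ hφ z hz
    rw [secondOrderOp_eq_zero_of_eqOn_zero isOpen_Ioo p q₁ r₁
      (fun x hx => by rw [firstOrderOp, hφw x hx, sub_self, mul_zero]) hz, firstOrderOp,
      Filter.EventuallyEq.deriv_eq (Filter.eventually_of_mem hmem hT), hT z hz,
      deriv_fun_mul (hFd.differentiableAt hmem) (hφd.differentiableAt hmem), hφw z hz] at hA
    have hprod : bf z * Real.exp (W z) * deriv F z = 0 := by linear_combination hA
    exact (mul_eq_zero.1 hprod).resolve_left (mul_ne_zero (hb0 z hz) (Real.exp_ne_zero _))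
  obtain ⟨lam, hlam⟩ :=
    isOpen_Ioo.exists_is_const_of_deriv_eq_zero isPreconnected_Ioo hFd hF0
  refine ⟨lam, hlam, fun ψ hψ _ hψw z hz => ?_⟩
  rw [secondOrderOp_eq_mul_of_deriv_eq isOpen_Ioo p q r hwd
    (hψ.differentiableOn (by simp)) hψw hz, ← hlam z hz]
end

section
/- Let I ⊆ ℝ be an open interval, let q, r, q₁, r₁, w : I → ℝ be smooth, p, b : I → ℝ smooth and nonvanishing, and λ ∈ ℝ a constant such that p·(w' + w²) + q·w + r = λ identically on I. Define T y = p·y'' + q·y' + r·y, T₁ y = p·y'' + q₁·y' + r₁·y, A y = b·(y' - w·y), and set ŵ = -w - q/p + b'/b and B y = (p/b)·(y' - ŵ·y). If A(T y) = T₁(A y) on I for every smooth y, then for every smooth y : I → ℝ one has B(A y) = T y - λ·y and A(B y) = T₁ y - λ·y on I; that is, T = B A + λ and T₁ = A B + λ. -/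
open Set

lemma ContDiffOn.deriv_Ioo {a b : ℝ} {f : ℝ → ℝ} (hf : ContDiffOn ℝ (⊤ : ℕ∞) f (Ioo a b)) :
    ContDiffOn ℝ (⊤ : ℕ∞) (deriv f) (Ioo a b) :=
  hf.deriv_of_isOpen isOpen_Ioo (by simp)

lemma ContDiffOn.differentiableAt_Ioo {a b z : ℝ} {f : ℝ → ℝ}
    (hf : ContDiffOn ℝ (⊤ : ℕ∞) f (Ioo a b)) (hz : z ∈ Ioo a b) : DifferentiableAt ℝ f z :=
  (hf.differentiableOn (by simp)).differentiableAt (isOpen_Ioo.mem_nhds hz)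

lemma ContDiffOn.secondOrderOp_Ioo {a b : ℝ} {p q r y : ℝ → ℝ}
    (hp : ContDiffOn ℝ (⊤ : ℕ∞) p (Ioo a b)) (hq : ContDiffOn ℝ (⊤ : ℕ∞) q (Ioo a b))
    (hr : ContDiffOn ℝ (⊤ : ℕ∞) r (Ioo a b)) (hy : ContDiffOn ℝ (⊤ : ℕ∞) y (Ioo a b)) :
    ContDiffOn ℝ (⊤ : ℕ∞) (secondOrderOp p q r y) (Ioo a b) :=
  ((hp.mul hy.deriv_Ioo.deriv_Ioo).add (hq.mul hy.deriv_Ioo)).add (hr.mul hy)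

lemma ContDiffOn.firstOrderOp_Ioo {a b : ℝ} {c g y : ℝ → ℝ}
    (hc : ContDiffOn ℝ (⊤ : ℕ∞) c (Ioo a b)) (hg : ContDiffOn ℝ (⊤ : ℕ∞) g (Ioo a b))
    (hy : ContDiffOn ℝ (⊤ : ℕ∞) y (Ioo a b)) :
    ContDiffOn ℝ (⊤ : ℕ∞) (firstOrderOp c g y) (Ioo a b) :=
  hc.mul (hy.deriv_Ioo.sub (hg.mul hy))

/-- The product rule for `c (D - g)`. -/
lemma deriv_firstOrderOp {c g u : ℝ → ℝ} {z : ℝ} (hc : DifferentiableAt ℝ c z)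
    (hg : DifferentiableAt ℝ g z) (hu : DifferentiableAt ℝ u z)
    (hu' : DifferentiableAt ℝ (deriv u) z) :
    deriv (firstOrderOp c g u) z = deriv c z * (deriv u z - g z * u z)
      + c z * (deriv (deriv u) z - (deriv g z * u z + g z * deriv u z)) :=
  (hc.hasDerivAt.mul (hu'.hasDerivAt.sub (hg.hasDerivAt.mul hu.hasDerivAt))).deriv

/-- A first-order operator `b (D - w)` with `b z ≠ 0` attains every 1-jet at `z`. -/
lemma exists_firstOrderOp_jet {b w : ℝ → ℝ} {z : ℝ} (hb : DifferentiableAt ℝ b z)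
    (hw : DifferentiableAt ℝ w z) (hbz : b z ≠ 0) (s t : ℝ) :
    ∃ y : ℝ → ℝ, ContDiff ℝ (⊤ : ℕ∞) y ∧ firstOrderOp b w y z = s ∧
      deriv (firstOrderOp b w y) z = t := by
  set α := s / b z with hα
  set β := (t - deriv b z * α) / b z + w z * α with hβ
  have h1 : ∀ x, HasDerivAt (fun x => α * (x - z) + β / 2 * (x - z) ^ 2)
      (α + β * (x - z)) x := fun x => by
    have h := (hasDerivAt_id x).sub_const z
    refine ((h.const_mul α).add ((h.pow 2).const_mul (β / 2))).congr_deriv ?_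
    simp
    ring
  have h2 : HasDerivAt (fun x => α + β * (x - z)) β z := by
    simpa using (((hasDerivAt_id z).sub_const z).const_mul β).const_add α
  have hd : deriv (fun x => α * (x - z) + β / 2 * (x - z) ^ 2) = fun x => α + β * (x - z) :=
    funext fun x => (h1 x).deriv
  refine ⟨fun x => α * (x - z) + β / 2 * (x - z) ^ 2, by fun_prop, ?_, ?_⟩
  · rw [firstOrderOp, hd, hα]
    field_simp
    ring
  · rw [deriv_firstOrderOp hb hw (h1 z).differentiableAt (hd ▸ h2.differentiableAt), hd, h2.deriv,
      hβ]
    field_simp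
    ring

/-- an intertwining relation `A T = T₁ A` together with the Riccati
relation `p(w' + w²) + q w + r = λ` yields the factorizations `T = BA + λ` and
`T₁ = AB + λ`, where `B = (p/b)(D - ŵ)` with `ŵ = -w - q/p + b'/b`. -/
theorem statement1 (a b : ℝ) (hab : a < b)
    (q r q₁ r₁ w p bf : ℝ → ℝ) (lam : ℝ)
    (hq : ContDiffOn ℝ (⊤ : ℕ∞) q (Ioo a b)) (hr : ContDiffOn ℝ (⊤ : ℕ∞) r (Ioo a b))
    (hq₁ : ContDiffOn ℝ (⊤ : ℕ∞) q₁ (Ioo a b)) (hr₁ : ContDiffOn ℝ (⊤ : ℕ∞) r₁ (Ioo a b))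
    (hw : ContDiffOn ℝ (⊤ : ℕ∞) w (Ioo a b))
    (hp : ContDiffOn ℝ (⊤ : ℕ∞) p (Ioo a b)) (hp0 : ∀ z ∈ Ioo a b, p z ≠ 0)
    (hb : ContDiffOn ℝ (⊤ : ℕ∞) bf (Ioo a b)) (hb0 : ∀ z ∈ Ioo a b, bf z ≠ 0)
    (hRiccati : ∀ z ∈ Ioo a b,
      p z * (deriv w z + (w z) ^ 2) + q z * w z + r z = lam)
    (hinter : ∀ y : ℝ → ℝ, ContDiffOn ℝ (⊤ : ℕ∞) y (Ioo a b) → ∀ z ∈ Ioo a b,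
      firstOrderOp bf w (secondOrderOp p q r y) z
        = secondOrderOp p q₁ r₁ (firstOrderOp bf w y) z) :
    ∀ y : ℝ → ℝ, ContDiffOn ℝ (⊤ : ℕ∞) y (Ioo a b) → ∀ z ∈ Ioo a b,
      (firstOrderOp (fun x => p x / bf x)
          (fun x => -w x - q x / p x + deriv bf x / bf x)
          (firstOrderOp bf w y) z
        = secondOrderOp p q r y z - lam * y z) ∧
      (firstOrderOp bf w
          (firstOrderOp (fun x => p x / bf x)
            (fun x => -w x - q x / p x + deriv bf x / bf x) y) z
        = secondOrderOp p q₁ r₁ y z - lam * y z) := by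
  have hpb : ContDiffOn ℝ (⊤ : ℕ∞) (fun x => p x / bf x) (Ioo a b) := hp.div hb hb0
  have hg : ContDiffOn ℝ (⊤ : ℕ∞) (fun x => -w x - q x / p x + deriv bf x / bf x) (Ioo a b) :=
    (hw.neg.sub (hq.div hp hp0)).add (hb.deriv_Ioo.div hb hb0)
  have hBA : ∀ y : ℝ → ℝ, ContDiffOn ℝ (⊤ : ℕ∞) y (Ioo a b) → ∀ z ∈ Ioo a b,
      firstOrderOp (fun x => p x / bf x) (fun x => -w x - q x / p x + deriv bf x / bf x)
        (firstOrderOp bf w y) z = secondOrderOp p q r y z - lam * y z := by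
    intro y hy z hz
    have hpz := hp0 z hz
    have hbz := hb0 z hz
    rw [firstOrderOp, deriv_firstOrderOp (hb.differentiableAt_Ioo hz) (hw.differentiableAt_Ioo hz)
      (hy.differentiableAt_Ioo hz) (hy.deriv_Ioo.differentiableAt_Ioo hz), ← hRiccati z hz]
    simp only [firstOrderOp, secondOrderOp]
    field_simp
    ring
  intro y hy z hz
  refine ⟨hBA y hy z hz, ?_⟩
  have hbz := hb0 z hz
  generalize (fun x => -w x - q x / p x + deriv bf x / bf x) = g at hg hBA ⊢
  have hcz : bf z * (p z / bf z) = p z := by field_simp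
  obtain ⟨e, f, hAB⟩ : ∃ e f : ℝ, ∀ u : ℝ → ℝ, ContDiffOn ℝ (⊤ : ℕ∞) u (Ioo a b) →
      firstOrderOp bf w (firstOrderOp (fun x => p x / bf x) g u) z
        = p z * deriv (deriv u) z + e * deriv u z + f * u z := by
    refine ⟨bf z * (deriv (fun x => p x / bf x) z - p z / bf z * g z - w z * (p z / bf z)),
      bf z * (-deriv (fun x => p x / bf x) z * g z - p z / bf z * deriv g z
        + w z * (p z / bf z) * g z), fun u hu => ?_⟩
    rw [firstOrderOp, deriv_firstOrderOp (hpb.differentiableAt_Ioo hz)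
      (hg.differentiableAt_Ioo hz) (hu.differentiableAt_Ioo hz)
      (hu.deriv_Ioo.differentiableAt_Ioo hz), firstOrderOp]
    linear_combination deriv (deriv u) z * hcz
  have hAv : ∀ v : ℝ → ℝ, ContDiffOn ℝ (⊤ : ℕ∞) v (Ioo a b) →
      (e - q₁ z) * deriv (firstOrderOp bf w v) z
        + (f - r₁ z + lam) * firstOrderOp bf w v z = 0 := by
    intro v hv
    have hABA := hAB _ (hb.firstOrderOp_Ioo hw hv)
    have heq : firstOrderOp (fun x => p x / bf x) g (firstOrderOp bf w v)
        =ᶠ[nhds z] fun x => secondOrderOp p q r v x - lam * v x :=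
      Filter.eventually_of_mem (isOpen_Ioo.mem_nhds hz) (hBA v hv)
    have hd : deriv (fun x => secondOrderOp p q r v x - lam * v x) z
        = deriv (secondOrderOp p q r v) z - lam * deriv v z :=
      (((hp.secondOrderOp_Ioo hq hr hv).differentiableAt_Ioo hz).hasDerivAt.sub
        ((hv.differentiableAt_Ioo hz).hasDerivAt.const_mul lam)).deriv
    have hT := hinter v hv z hz
    rw [firstOrderOp, heq.deriv_eq, heq.eq_of_nhds, hd] at hABA
    rw [secondOrderOp, firstOrderOp] at hT
    have hv0 : firstOrderOp bf w v z = bf z * (deriv v z - w z * v z) := rfl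
    linear_combination hT - hABA + lam * hv0
  obtain ⟨v, hv, hv0, hv1⟩ := exists_firstOrderOp_jet (hb.differentiableAt_Ioo hz)
    (hw.differentiableAt_Ioo hz) hbz (y z) (deriv y z)
  have hjet := hAv v hv.contDiffOn
  rw [hv0, hv1] at hjet
  rw [hAB y hy, secondOrderOp]
  linear_combination hjet
end

section
/- Let I ⊆ ℝ be an open interval, p, q₀, r₀ : I → ℝ smooth, and T₀ y = p·y'' + q₀·y' + r₀·y. Let φ₁, …, φₙ : I → ℝ be smooth functions with T₀φⱼ = λⱼφⱼ for pairwise distinct constants λ₁, …, λₙ, and let b₁, …, bₙ : I → ℝ be smooth and nonvanishing. For 1 ≤ k ≤ n let Wₖ(z) = det[(d/dz)^{j-1}φᵢ(z)]_{1≤i,j≤k} be the Wronskian of φ₁, …, φₖ, and assume each Wₖ is nonvanishing on I. Define σₖ = Σ_{j=1}^{k} bⱼ'/bⱼ and υₖ = Wₖ'/Wₖ (with σ₀ = υ₀ = 0), qₖ = q₀ + k·p' - 2p·σₖ, rₖ = r₀ + k·q₀' + ½k(k-1)p'' + υₖ·p' - σₖ·(q₀ + k·p') + (σₖ² - σₖ'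 + 2υₖ')·p, Tₖ y = p·y'' + qₖ·y' + rₖ·y, wₖ = σ_{k-1} + υₖ - υ_{k-1}, and Aₖ y = bₖ·(y' - wₖ·y). Then for every k = 1, …, n and every smooth y : I → ℝ, Aₖ(T_{k-1} y) = Tₖ(Aₖ y) on I. -/
open Set

/-- Wronskian of the functions `φ 1, …, φ k`. -/
noncomputable def wronskian (φ : ℕ → ℝ → ℝ) (k : ℕ) (z : ℝ) : ℝ :=
  (Matrix.of fun i j : Fin k => iteratedDeriv (j : ℕ) (φ (i.1 + 1)) z).det

/-- `σ k = ∑_{j=1}^k bⱼ'/bⱼ`. -/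
noncomputable def sigmaGauge (bf : ℕ → ℝ → ℝ) (k : ℕ) (z : ℝ) : ℝ :=
  ∑ j ∈ Finset.Icc 1 k, deriv (bf j) z / bf j z

/-- `υ k = Wₖ'/Wₖ` (with `υ 0 = 0`, as `W₀ ≡ 1`). -/
noncomputable def upsGauge (φ : ℕ → ℝ → ℝ) (k : ℕ) (z : ℝ) : ℝ :=
  deriv (wronskian φ k) z / wronskian φ k z

/-- Coefficient `qₖ = q₀ + k p' - 2 p σₖ`. -/
noncomputable def qCoeff (p q₀ : ℝ → ℝ) (bf : ℕ → ℝ → ℝ) (k : ℕ) (z : ℝ) : ℝ :=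
  q₀ z + k * deriv p z - 2 * p z * sigmaGauge bf k z

/-- Coefficient `rₖ`. -/
noncomputable def rCoeff (p q₀ r₀ : ℝ → ℝ) (bf φ : ℕ → ℝ → ℝ) (k : ℕ) (z : ℝ) : ℝ :=
  r₀ z + k * deriv q₀ z + (1 / 2 : ℝ) * k * (k - 1) * deriv (deriv p) z
    + upsGauge φ k z * deriv p z
    - sigmaGauge bf k z * (q₀ z + k * deriv p z)
    + ((sigmaGauge bf k z) ^ 2 - deriv (sigmaGauge bf k) z
        + 2 * deriv (upsGauge φ k) z) * p z

/-- `wₖ = σ_{k-1} + υₖ - υ_{k-1}`. -/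
noncomputable def wFact (bf φ : ℕ → ℝ → ℝ) (k : ℕ) (z : ℝ) : ℝ :=
  sigmaGauge bf (k - 1) z + upsGauge φ k z - upsGauge φ (k - 1) z

/-- The derivative of a function smooth on an open set is smooth there. -/
theorem ContDiffOn.deriv_smooth {U : Set ℝ} (hU : IsOpen U) {f : ℝ → ℝ}
    (hf : ContDiffOn ℝ (⊤ : ℕ∞) f U) : ContDiffOn ℝ (⊤ : ℕ∞) (deriv f) U :=
  hf.deriv_of_isOpen hU (by simp)

theorem ContDiffOn.hasDerivAt_of_isOpen {U : Set ℝ} (hU : IsOpen U) {f : ℝ → ℝ}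
    (hf : ContDiffOn ℝ (⊤ : ℕ∞) f U) {z : ℝ} (hz : z ∈ U) : HasDerivAt f (deriv f z) z :=
  ((hf.contDiffAt (hU.mem_nhds hz)).differentiableAt (by simp)).hasDerivAt

theorem ContDiffOn.iteratedDeriv_smooth {U : Set ℝ} (hU : IsOpen U) {f : ℝ → ℝ}
    (hf : ContDiffOn ℝ (⊤ : ℕ∞) f U) (m : ℕ) :
    ContDiffOn ℝ (⊤ : ℕ∞) (iteratedDeriv m f) U := by
  induction m with
  | zero => simpa using hf
  | succ m ih => rw [iteratedDeriv_succ]; exact ih.deriv_smooth hU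

/-- Equality on an open set passes to derivatives. -/
theorem Set.EqOn.hasDerivAt_of_isOpen {U : Set ℝ} (hU : IsOpen U) {f g : ℝ → ℝ} (h : EqOn f g U)
    {z g' : ℝ} (hz : z ∈ U) (hg : HasDerivAt g g' z) : HasDerivAt f g' z :=
  hg.congr_of_eventuallyEq (h.eventuallyEq_of_mem (hU.mem_nhds hz))

theorem contDiffOn_firstOrderOp {U : Set ℝ} (hU : IsOpen U) {b w y : ℝ → ℝ}
    (hb : ContDiffOn ℝ (⊤ : ℕ∞) b U) (hw : ContDiffOn ℝ (⊤ : ℕ∞) w U)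
    (hy : ContDiffOn ℝ (⊤ : ℕ∞) y U) : ContDiffOn ℝ (⊤ : ℕ∞) (firstOrderOp b w y) U :=
  hb.mul ((hy.deriv_smooth hU).sub (hw.mul hy))

/-- The Riccati equation for the logarithmic derivative of a nonvanishing eigenfunction. -/
theorem riccati_of_eigenfunction {U : Set ℝ} (hU : IsOpen U) {p q r w ψ : ℝ → ℝ} {c : ℝ}
    (hw : ContDiffOn ℝ (⊤ : ℕ∞) w U) (hψ : ContDiffOn ℝ (⊤ : ℕ∞) ψ U)
    (hψ0 : ∀ z ∈ U, ψ z ≠ 0) (hψw : ∀ z ∈ U, deriv ψ z = w z * ψ z)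
    (heig : ∀ z ∈ U, secondOrderOp p q r ψ z = c * ψ z) :
    ∀ z ∈ U, p z * (deriv w z + w z ^ 2) + q z * w z + r z = c := by
  intro z hz
  have h2 : deriv (deriv ψ) z = deriv w z * ψ z + w z * deriv ψ z :=
    (Set.EqOn.hasDerivAt_of_isOpen hU (g := fun x => w x * ψ x) hψw hz
      ((hw.hasDerivAt_of_isOpen hU hz).mul (hψ.hasDerivAt_of_isOpen hU hz))).deriv
  have h := heig z hz
  rw [secondOrderOp, h2, hψw z hz] at h
  apply mul_right_cancel₀ (hψ0 z hz)
  linear_combination h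

/-- A one-step Darboux transformation with factorization gauge `b`. -/
theorem intertwining_of_riccati {U : Set ℝ} (hU : IsOpen U) {p q r q' r' w b y : ℝ → ℝ} {c : ℝ}
    (hp : ContDiffOn ℝ (⊤ : ℕ∞) p U) (hq : ContDiffOn ℝ (⊤ : ℕ∞) q U)
    (hr : ContDiffOn ℝ (⊤ : ℕ∞) r U) (hw : ContDiffOn ℝ (⊤ : ℕ∞) w U)
    (hb : ContDiffOn ℝ (⊤ : ℕ∞) b U) (hy : ContDiffOn ℝ (⊤ : ℕ∞) y U)
    (hb0 : ∀ z ∈ U, b z ≠ 0)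
    (hric : ∀ z ∈ U, p z * (deriv w z + w z ^ 2) + q z * w z + r z = c)
    (hq' : ∀ z ∈ U, q' z = q z + deriv p z - 2 * p z * (deriv b z / b z))
    (hr' : ∀ z ∈ U, r' z = r z + deriv q z + w z * deriv p z + 2 * deriv w z * p z
      - deriv b z / b z * (q z + deriv p z)
      + p z * (2 * (deriv b z / b z) ^ 2 - deriv (deriv b) z / b z)) :
    ∀ z ∈ U, firstOrderOp b w (secondOrderOp p q r y) z
      = secondOrderOp p q' r' (firstOrderOp b w y) z := by
  have D : ∀ {f : ℝ → ℝ}, ContDiffOn ℝ (⊤ : ℕ∞) f U → ∀ {x}, x ∈ U → HasDerivAt f (deriv f x) x :=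
    fun hf _ hx => hf.hasDerivAt_of_isOpen hU hx
  have hw1 := hw.deriv_smooth hU
  have hb1 := hb.deriv_smooth hU
  have hy1 := hy.deriv_smooth hU
  have hy2 := hy1.deriv_smooth hU
  intro z hz
  have hric' := (Set.EqOn.hasDerivAt_of_isOpen hU (g := fun _ => c) hric hz
    (hasDerivAt_const z c)).unique ((((D hp hz).mul ((D hw1 hz).add ((D hw hz).pow 2))).add
      ((D hq hz).mul (D hw hz))).add (D hr hz))
  have hT : deriv (secondOrderOp p q r y) z = _ :=
    ((((D hp hz).mul (D hy2 hz)).add ((D hq hz).mul (D hy1 hz))).add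
      ((D hr hz).mul (D hy hz))).deriv
  have hA : ∀ x ∈ U, HasDerivAt (firstOrderOp b w y) (deriv b x * (deriv y x - w x * y x)
      + b x * (deriv (deriv y) x - (deriv w x * y x + w x * deriv y x))) x := fun x hx =>
    (D hb hx).mul ((D hy1 hx).sub ((D hw hx).mul (D hy hx)))
  have hA2 := (Set.EqOn.hasDerivAt_of_isOpen hU (fun x hx => (hA x hx).deriv) hz
    (((D hb1 hz).mul ((D hy1 hz).sub ((D hw hz).mul (D hy hz)))).add
      ((D hb hz).mul ((D hy2 hz).sub (((D hw1 hz).mul (D hy hz)).add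
        ((D hw hz).mul (D hy1 hz))))))).deriv
  have hz0 := hb0 z hz
  rw [firstOrderOp, hT, secondOrderOp, secondOrderOp, hA2, (hA z hz).deriv, hq' z hz, hr' z hz,
    firstOrderOp]
  simp only [Pi.add_apply, Pi.mul_apply, Pi.sub_apply, Pi.pow_apply] at hric' ⊢
  field_simp
  linear_combination (-(b z) ^ 2 * y z) * hric'

/-- Seed functions `φ 1, …, φ n` and factorization gauges `bf 1, …, bf n` on an open set `U`, with
nonvanishing gauges and Wronskians. -/
structure IsCrumSeed (n : ℕ) (U : Set ℝ) (φ bf : ℕ → ℝ → ℝ) : Prop where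
  isOpen : IsOpen U
  seed_smooth : ∀ j ∈ Finset.Icc 1 n, ContDiffOn ℝ (⊤ : ℕ∞) (φ j) U
  gauge_smooth : ∀ j ∈ Finset.Icc 1 n, ContDiffOn ℝ (⊤ : ℕ∞) (bf j) U
  gauge_ne_zero : ∀ j ∈ Finset.Icc 1 n, ∀ z ∈ U, bf j z ≠ 0
  wronskian_ne_zero : ∀ k ∈ Finset.Icc 1 n, ∀ z ∈ U, wronskian φ k z ≠ 0

/-- The composition `Aₖ ⋯ A₁` of the intertwiners. -/
noncomputable def crumChain (φ bf : ℕ → ℝ → ℝ) : ℕ → (ℝ → ℝ) → ℝ → ℝ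
  | 0, y => y
  | k + 1, y => firstOrderOp (bf (k + 1)) (wFact bf φ (k + 1)) (crumChain φ bf k y)

/-- The coefficient of the `m`-th derivative in `Aₖ ⋯ A₁`. -/
noncomputable def crumCoeff (φ bf : ℕ → ℝ → ℝ) : ℕ → ℕ → ℝ → ℝ
  | 0, m => fun _ => if m = 0 then 1 else 0
  | k + 1, 0 => firstOrderOp (bf (k + 1)) (wFact bf φ (k + 1)) (crumCoeff φ bf k 0)
  | k + 1, m + 1 => fun z =>
      firstOrderOp (bf (k + 1)) (wFact bf φ (k + 1)) (crumCoeff φ bf k (m + 1)) z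
        + bf (k + 1) z * crumCoeff φ bf k m z

/-- The product `b₁ ⋯ bₖ` of the factorization gauges. -/
noncomputable def gaugeProd (bf : ℕ → ℝ → ℝ) (k : ℕ) (z : ℝ) : ℝ :=
  ∏ j ∈ Finset.Icc 1 k, bf j z

theorem wronskian_zero (φ : ℕ → ℝ → ℝ) : wronskian φ 0 = fun _ => 1 := by
  ext z; simp [wronskian]

theorem gaugeProd_succ (bf : ℕ → ℝ → ℝ) (k : ℕ) (z : ℝ) :
    gaugeProd bf (k + 1) z = gaugeProd bf k z * bf (k + 1) z := by
  rw [gaugeProd, Finset.prod_Icc_succ_top (by omega), gaugeProd]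

theorem sigmaGauge_succ (bf : ℕ → ℝ → ℝ) (k : ℕ) (z : ℝ) :
    sigmaGauge bf (k + 1) z = sigmaGauge bf k z + deriv (bf (k + 1)) z / bf (k + 1) z := by
  rw [sigmaGauge, Finset.sum_Icc_succ_top (by omega), sigmaGauge]

theorem crumCoeff_eq_zero (φ bf : ℕ → ℝ → ℝ) {k m : ℕ} (h : k < m) :
    crumCoeff φ bf k m = 0 := by
  induction k generalizing m with
  | zero => ext z; simp [crumCoeff, h.ne']
  | succ k ih =>
    obtain ⟨m, rfl⟩ : ∃ l, m = l + 1 := ⟨m - 1, by omega⟩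
    ext z
    simp [crumCoeff, firstOrderOp, ih (show k < m + 1 by omega), ih (show k < m by omega)]

theorem crumCoeff_self (φ bf : ℕ → ℝ → ℝ) (k : ℕ) (z : ℝ) :
    crumCoeff φ bf k k z = gaugeProd bf k z := by
  induction k with
  | zero => simp [crumCoeff, gaugeProd]
  | succ k ih =>
    simp [crumCoeff, firstOrderOp, crumCoeff_eq_zero φ bf (Nat.lt_succ_self k), ih,
      gaugeProd_succ, mul_comm]

namespace IsCrumSeed

variable {n : ℕ} {U : Set ℝ} {φ bf : ℕ → ℝ → ℝ}

theorem wronskian_ne_zero' (h : IsCrumSeed n U φ bf) {k : ℕ} (hk : k ≤ n) {z : ℝ} (hz : z ∈ U) :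
    wronskian φ k z ≠ 0 := by
  rcases Nat.eq_zero_or_pos k with rfl | h0
  · simp [wronskian_zero]
  · exact h.wronskian_ne_zero k (Finset.mem_Icc.2 ⟨h0, hk⟩) z hz

theorem wronskian_smooth (h : IsCrumSeed n U φ bf) {k : ℕ} (hk : k ≤ n) :
    ContDiffOn ℝ (⊤ : ℕ∞) (wronskian φ k) U := by
  have : wronskian φ k = fun z => ∑ σ : Equiv.Perm (Fin k), (Equiv.Perm.sign σ : ℤ) *
      ∏ i : Fin k, iteratedDeriv (i : ℕ) (φ ((σ i : Fin k).1 + 1)) z := by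
    ext z; simp [wronskian, Matrix.det_apply']
  rw [this]
  refine ContDiffOn.sum fun σ _ => contDiffOn_const.mul (contDiffOn_prod fun i _ => ?_)
  exact (h.seed_smooth _ (Finset.mem_Icc.2 ⟨by omega, by omega⟩)).iteratedDeriv_smooth h.isOpen _

theorem upsGauge_smooth (h : IsCrumSeed n U φ bf) {k : ℕ} (hk : k ≤ n) :
    ContDiffOn ℝ (⊤ : ℕ∞) (upsGauge φ k) U :=
  ((h.wronskian_smooth hk).deriv_smooth h.isOpen).div (h.wronskian_smooth hk)
    fun _ hz => h.wronskian_ne_zero' hk hz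

theorem sigmaGauge_smooth (h : IsCrumSeed n U φ bf) {k : ℕ} (hk : k ≤ n) :
    ContDiffOn ℝ (⊤ : ℕ∞) (sigmaGauge bf k) U := by
  refine ContDiffOn.sum fun j hj => ?_
  have hj : j ∈ Finset.Icc 1 n := Finset.Icc_subset_Icc_right hk hj
  exact ((h.gauge_smooth j hj).deriv_smooth h.isOpen).div (h.gauge_smooth j hj)
    (h.gauge_ne_zero j hj)

theorem wFact_smooth (h : IsCrumSeed n U φ bf) {k : ℕ} (hk : k ≤ n) :
    ContDiffOn ℝ (⊤ : ℕ∞) (wFact bf φ k) U :=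
  ((h.sigmaGauge_smooth (by omega)).add (h.upsGauge_smooth hk)).sub (h.upsGauge_smooth (by omega))

theorem crumChain_smooth (h : IsCrumSeed n U φ bf) {k : ℕ} (hk : k ≤ n) {y : ℝ → ℝ}
    (hy : ContDiffOn ℝ (⊤ : ℕ∞) y U) : ContDiffOn ℝ (⊤ : ℕ∞) (crumChain φ bf k y) U := by
  induction k with
  | zero => exact hy
  | succ k ih =>
    exact contDiffOn_firstOrderOp h.isOpen (h.gauge_smooth _ (Finset.mem_Icc.2 ⟨by omega, hk⟩))
      (h.wFact_smooth hk) (ih (by omega))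

theorem crumCoeff_smooth (h : IsCrumSeed n U φ bf) {k : ℕ} (hk : k ≤ n) (m : ℕ) :
    ContDiffOn ℝ (⊤ : ℕ∞) (crumCoeff φ bf k m) U := by
  induction k generalizing m with
  | zero => exact contDiffOn_const
  | succ k ih =>
    have hb := h.gauge_smooth (k + 1) (Finset.mem_Icc.2 ⟨by omega, hk⟩)
    have hA : ∀ m, ContDiffOn ℝ (⊤ : ℕ∞)
        (firstOrderOp (bf (k + 1)) (wFact bf φ (k + 1)) (crumCoeff φ bf k m)) U := fun m =>
      contDiffOn_firstOrderOp h.isOpen hb (h.wFact_smooth hk) (ih (by omega) m)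
    cases m with
    | zero => exact hA 0
    | succ m => exact (hA (m + 1)).add (hb.mul (ih (by omega) m))

/-- Expansion of `Aₖ ⋯ A₁` as a linear differential operator. -/
theorem crumChain_eq_sum (h : IsCrumSeed n U φ bf) {k K : ℕ} (hk : k ≤ n) (hK : k < K)
    {y : ℝ → ℝ} (hy : ContDiffOn ℝ (⊤ : ℕ∞) y U) {z : ℝ} (hz : z ∈ U) :
    crumChain φ bf k y z = ∑ m ∈ Finset.range K, crumCoeff φ bf k m z * iteratedDeriv m y z := by
  induction k generalizing K z with
  | zero =>
    rw [Finset.sum_eq_single_of_mem 0 (by simpa using hK)]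
    · simp [crumChain, crumCoeff]
    · intro m _ hm; simp [crumCoeff, hm]
  | succ k ih =>
    obtain ⟨K, rfl⟩ : ∃ l, K = l + 1 := ⟨K - 1, by omega⟩
    have hderiv : deriv (crumChain φ bf k y) z = ∑ m ∈ Finset.range (K + 1),
        (deriv (crumCoeff φ bf k m) z * iteratedDeriv m y z
          + crumCoeff φ bf k m z * iteratedDeriv (m + 1) y z) := by
      refine (Set.EqOn.hasDerivAt_of_isOpen h.isOpen
        (fun x hx => ih (K := K + 1) (by omega) (by omega) hx) hz
        (HasDerivAt.fun_sum fun m _ => ?_)).deriv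
      rw [iteratedDeriv_succ]
      exact ((h.crumCoeff_smooth (by omega) m).hasDerivAt_of_isOpen h.isOpen hz).mul
        ((hy.iteratedDeriv_smooth h.isOpen m).hasDerivAt_of_isOpen h.isOpen hz)
    rw [crumChain, firstOrderOp, hderiv, ih (K := K + 1) (by omega) (by omega) hz,
      Finset.sum_add_distrib, Finset.sum_range_succ (fun m => _ * iteratedDeriv (m + 1) y z),
      crumCoeff_eq_zero φ bf (show k < K by omega), Finset.sum_range_succ' _ K,
      Finset.sum_range_succ' _ K, Finset.sum_range_succ' _ K]
    simp only [crumCoeff, firstOrderOp, mul_add, mul_sub, add_mul, sub_mul, Finset.mul_sum,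
      Finset.sum_add_distrib, Finset.sum_sub_distrib, Pi.zero_apply, mul_assoc]
    ring

theorem gaugeProd_ne_zero (h : IsCrumSeed n U φ bf) {k : ℕ} (hk : k ≤ n) {z : ℝ} (hz : z ∈ U) :
    gaugeProd bf k z ≠ 0 :=
  Finset.prod_ne_zero_iff.2 fun j hj =>
    h.gauge_ne_zero j (Finset.Icc_subset_Icc_right hk hj) z hz

theorem hasDerivAt_gaugeProd (h : IsCrumSeed n U φ bf) {k : ℕ} (hk : k ≤ n) {z : ℝ}
    (hz : z ∈ U) :
    HasDerivAt (gaugeProd bf k) (sigmaGauge bf k z * gaugeProd bf k z) z := by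
  induction k with
  | zero =>
    rw [show gaugeProd bf 0 = fun _ => 1 by ext; simp [gaugeProd]]
    simpa [sigmaGauge] using hasDerivAt_const z (1 : ℝ)
  | succ k ih =>
    have hmem : k + 1 ∈ Finset.Icc 1 n := Finset.mem_Icc.2 ⟨by omega, hk⟩
    have hb0 := h.gauge_ne_zero _ hmem z hz
    have hd := (ih (by omega)).mul ((h.gauge_smooth _ hmem).hasDerivAt_of_isOpen h.isOpen hz)
    rw [show gaugeProd bf (k + 1) = gaugeProd bf k * bf (k + 1) from
      funext (gaugeProd_succ bf k)]
    refine hd.congr_deriv ?_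
    rw [sigmaGauge_succ, Pi.mul_apply]
    field_simp

/-- If the chain annihilates the earlier seeds, the Wronskian factors through the chain values. -/
theorem prod_gaugeProd_mul_wronskian (h : IsCrumSeed n U φ bf) {k : ℕ} (hk : k ≤ n) {z : ℝ}
    (hz : z ∈ U)
    (hker : ∀ j < k, ∀ i < j, crumChain φ bf j (φ (i + 1)) z = 0) :
    wronskian φ k z * ∏ j ∈ Finset.range k, gaugeProd bf j z
      = ∏ j ∈ Finset.range k, crumChain φ bf j (φ (j + 1)) z := by
  let C : Matrix (Fin k) (Fin k) ℝ := .of fun m j => crumCoeff φ bf j m z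
  have hC : C.det = ∏ j ∈ Finset.range k, gaugeProd bf j z := by
    rw [Matrix.det_of_isUpperTriangular, Finset.prod_range]
    · exact Finset.prod_congr rfl fun j _ => crumCoeff_self φ bf j z
    · intro i j hij
      exact congrFun (crumCoeff_eq_zero φ bf hij) z
  have hN : (Matrix.of fun i j : Fin k => iteratedDeriv (j : ℕ) (φ (i.1 + 1)) z) * C
      = .of fun i j : Fin k => crumChain φ bf j (φ (i.1 + 1)) z := by
    ext i j
    have hi : (i : ℕ) + 1 ∈ Finset.Icc 1 n := Finset.mem_Icc.2 ⟨by omega, by omega⟩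
    simp only [Matrix.mul_apply, Matrix.of_apply, C]
    rw [h.crumChain_eq_sum (by omega) j.2 (h.seed_smooth _ hi) hz, Finset.sum_range]
    exact Finset.sum_congr rfl fun _ _ => mul_comm _ _
  rw [wronskian, ← hC, ← Matrix.det_mul, hN, Matrix.det_of_isLowerTriangular, Finset.prod_range]
  · rfl
  · intro i j hij
    exact hker j j.2 i hij

/-- The value of the chain on the next seed function, given that it annihilates earlier seeds. -/
theorem crumChain_seed_of_ker (h : IsCrumSeed n U φ bf) {k : ℕ} (hk : k + 1 ≤ n)
    {z : ℝ} (hz : z ∈ U) (hker : ∀ j ≤ k, ∀ i < j, crumChain φ bf j (φ (i + 1)) z = 0) :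
    crumChain φ bf k (φ (k + 1)) z
      = gaugeProd bf k z * (wronskian φ (k + 1) z / wronskian φ k z) := by
  have h1 := h.prod_gaugeProd_mul_wronskian hk hz fun j hj => hker j (by omega)
  have h0 := h.prod_gaugeProd_mul_wronskian (k := k) (by omega) hz fun j hj => hker j (by omega)
  rw [Finset.prod_range_succ, Finset.prod_range_succ, ← h0] at h1
  have hW := h.wronskian_ne_zero' (show k ≤ n by omega) hz
  have hP : ∏ j ∈ Finset.range k, gaugeProd bf j z ≠ 0 :=
    Finset.prod_ne_zero_iff.2 fun j hj =>
      h.gaugeProd_ne_zero (by have := Finset.mem_range.1 hj; omega) hz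
  field_simp
  apply mul_left_cancel₀ hP
  linear_combination -h1

theorem deriv_crumChain_of_ker (h : IsCrumSeed n U φ bf) {k : ℕ} (hk : k + 1 ≤ n)
    (hker : ∀ z ∈ U, ∀ j ≤ k, ∀ i < j, crumChain φ bf j (φ (i + 1)) z = 0)
    {z : ℝ} (hz : z ∈ U) :
    deriv (crumChain φ bf k (φ (k + 1))) z
      = wFact bf φ (k + 1) z * crumChain φ bf k (φ (k + 1)) z := by
  have hW := h.wronskian_ne_zero' (show k ≤ n by omega) hz
  have hW1 := h.wronskian_ne_zero' hk hz
  have hd := (Set.EqOn.hasDerivAt_of_isOpen h.isOpen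
    (fun x hx => h.crumChain_seed_of_ker hk hx (hker x hx)) hz
    ((h.hasDerivAt_gaugeProd (show k ≤ n by omega) hz).mul
      (((h.wronskian_smooth hk).hasDerivAt_of_isOpen h.isOpen hz).div
        ((h.wronskian_smooth (show k ≤ n by omega)).hasDerivAt_of_isOpen h.isOpen hz) hW))).deriv
  rw [hd, h.crumChain_seed_of_ker hk hz (hker z hz), wFact, upsGauge, upsGauge,
    Nat.add_sub_cancel]
  field_simp
  ring

theorem crumChain_seed_eq_zero (h : IsCrumSeed n U φ bf) {k : ℕ} (hk : k ≤ n) :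
    ∀ z ∈ U, ∀ j ≤ k, ∀ i < j, crumChain φ bf j (φ (i + 1)) z = 0 := by
  induction k with
  | zero => intro z _ j hj i hi; omega
  | succ k ih =>
    have ih := ih (by omega)
    intro z hz j hj i hi
    rcases Nat.lt_or_ge j (k + 1) with hjk | hjk
    · exact ih z hz j (by omega) i hi
    obtain rfl : j = k + 1 := by omega
    rw [crumChain, firstOrderOp]
    rcases Nat.lt_or_ge i k with hik | hik
    · rw [(Set.EqOn.hasDerivAt_of_isOpen h.isOpen (g := fun _ => 0)
        (fun x hx => ih x hx k le_rfl i hik) hz (hasDerivAt_const z 0)).deriv,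
        ih z hz k le_rfl i hik]
      ring
    · obtain rfl : i = k := by omega
      rw [h.deriv_crumChain_of_ker hk ih hz]
      ring

theorem crumChain_seed_ne_zero (h : IsCrumSeed n U φ bf) {k : ℕ} (hk : k + 1 ≤ n) {z : ℝ}
    (hz : z ∈ U) : crumChain φ bf k (φ (k + 1)) z ≠ 0 := by
  rw [h.crumChain_seed_of_ker hk hz (h.crumChain_seed_eq_zero (by omega) z hz)]
  exact mul_ne_zero (h.gaugeProd_ne_zero (by omega) hz)
    (div_ne_zero (h.wronskian_ne_zero' hk hz) (h.wronskian_ne_zero' (by omega) hz))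

variable {p q₀ r₀ : ℝ → ℝ}

theorem qCoeff_smooth (h : IsCrumSeed n U φ bf) (hp : ContDiffOn ℝ (⊤ : ℕ∞) p U)
    (hq₀ : ContDiffOn ℝ (⊤ : ℕ∞) q₀ U) {k : ℕ} (hk : k ≤ n) :
    ContDiffOn ℝ (⊤ : ℕ∞) (qCoeff p q₀ bf k) U :=
  (hq₀.add (contDiffOn_const.mul (hp.deriv_smooth h.isOpen))).sub
    ((contDiffOn_const.mul hp).mul (h.sigmaGauge_smooth hk))

theorem rCoeff_smooth (h : IsCrumSeed n U φ bf) (hp : ContDiffOn ℝ (⊤ : ℕ∞) p U)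
    (hq₀ : ContDiffOn ℝ (⊤ : ℕ∞) q₀ U) (hr₀ : ContDiffOn ℝ (⊤ : ℕ∞) r₀ U) {k : ℕ} (hk : k ≤ n) :
    ContDiffOn ℝ (⊤ : ℕ∞) (rCoeff p q₀ r₀ bf φ k) U := by
  have hp1 := hp.deriv_smooth h.isOpen
  have hσ := h.sigmaGauge_smooth hk
  have hυ := h.upsGauge_smooth hk
  exact ((((hr₀.add (contDiffOn_const.mul (hq₀.deriv_smooth h.isOpen))).add
    (contDiffOn_const.mul (hp1.deriv_smooth h.isOpen))).add (hυ.mul hp1)).sub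
    (hσ.mul (hq₀.add (contDiffOn_const.mul hp1)))).add
    ((((hσ.pow 2).sub (hσ.deriv_smooth h.isOpen)).add
      (contDiffOn_const.mul (hυ.deriv_smooth h.isOpen))).mul hp)

theorem qCoeff_succ (k : ℕ) (z : ℝ) :
    qCoeff p q₀ bf (k + 1) z = qCoeff p q₀ bf k z + deriv p z
      - 2 * p z * (deriv (bf (k + 1)) z / bf (k + 1) z) := by
  simp only [qCoeff, sigmaGauge_succ]
  push_cast
  ring

theorem rCoeff_succ (h : IsCrumSeed n U φ bf) (hp : ContDiffOn ℝ (⊤ : ℕ∞) p U)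
    (hq₀ : ContDiffOn ℝ (⊤ : ℕ∞) q₀ U) {k : ℕ} (hk : k + 1 ≤ n) {z : ℝ} (hz : z ∈ U) :
    rCoeff p q₀ r₀ bf φ (k + 1) z = rCoeff p q₀ r₀ bf φ k z + deriv (qCoeff p q₀ bf k) z
      + wFact bf φ (k + 1) z * deriv p z + 2 * deriv (wFact bf φ (k + 1)) z * p z
      - deriv (bf (k + 1)) z / bf (k + 1) z * (qCoeff p q₀ bf k z + deriv p z)
      + p z * (2 * (deriv (bf (k + 1)) z / bf (k + 1) z) ^ 2
        - deriv (deriv (bf (k + 1))) z / bf (k + 1) z) := by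
  have D : ∀ {f : ℝ → ℝ}, ContDiffOn ℝ (⊤ : ℕ∞) f U → HasDerivAt f (deriv f z) z :=
    fun hf => hf.hasDerivAt_of_isOpen h.isOpen hz
  have hmem : k + 1 ∈ Finset.Icc 1 n := Finset.mem_Icc.2 ⟨by omega, hk⟩
  have hb := h.gauge_smooth _ hmem
  have hb0 := h.gauge_ne_zero _ hmem z hz
  have hσ := h.sigmaGauge_smooth (show k ≤ n by omega)
  have hυ := h.upsGauge_smooth (show k ≤ n by omega)
  have hυ1 := h.upsGauge_smooth hk
  have hq1 : deriv (qCoeff p q₀ bf k) z = _ :=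
    (((D hq₀).add ((D (hp.deriv_smooth h.isOpen)).const_mul (k : ℝ))).sub
      (((D hp).const_mul 2).mul (D hσ))).deriv
  have hw1 : deriv (wFact bf φ (k + 1)) z = _ := (((D hσ).add (D hυ1)).sub (D hυ)).deriv
  have hσ1 := (Set.EqOn.hasDerivAt_of_isOpen h.isOpen (fun x _ => sigmaGauge_succ bf k x) hz
    ((D hσ).add ((D (hb.deriv_smooth h.isOpen)).div (D hb) hb0))).deriv
  rw [hq1, hw1, rCoeff, hσ1]
  simp only [rCoeff, qCoeff, wFact, sigmaGauge_succ, Nat.add_sub_cancel]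
  push_cast
  field_simp
  ring

/-- One step of the Crum sequence, given that the next chain value is an eigenfunction. -/
theorem intertwining_of_eigenfunction (h : IsCrumSeed n U φ bf)
    (hp : ContDiffOn ℝ (⊤ : ℕ∞) p U) (hq₀ : ContDiffOn ℝ (⊤ : ℕ∞) q₀ U)
    (hr₀ : ContDiffOn ℝ (⊤ : ℕ∞) r₀ U) {k : ℕ} (hk : k + 1 ≤ n) {c : ℝ}
    (heig : ∀ z ∈ U, secondOrderOp p (qCoeff p q₀ bf k) (rCoeff p q₀ r₀ bf φ k)
      (crumChain φ bf k (φ (k + 1))) z = c * crumChain φ bf k (φ (k + 1)) z)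
    {y : ℝ → ℝ} (hy : ContDiffOn ℝ (⊤ : ℕ∞) y U) :
    ∀ z ∈ U, firstOrderOp (bf (k + 1)) (wFact bf φ (k + 1))
        (secondOrderOp p (qCoeff p q₀ bf k) (rCoeff p q₀ r₀ bf φ k) y) z
      = secondOrderOp p (qCoeff p q₀ bf (k + 1)) (rCoeff p q₀ r₀ bf φ (k + 1))
        (firstOrderOp (bf (k + 1)) (wFact bf φ (k + 1)) y) z := by
  have hmem : k + 1 ∈ Finset.Icc 1 n := Finset.mem_Icc.2 ⟨by omega, hk⟩
  exact intertwining_of_riccati h.isOpen hp (h.qCoeff_smooth hp hq₀ (by omega))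
    (h.rCoeff_smooth hp hq₀ hr₀ (by omega)) (h.wFact_smooth hk) (h.gauge_smooth _ hmem) hy
    (h.gauge_ne_zero _ hmem)
    (riccati_of_eigenfunction h.isOpen (h.wFact_smooth hk)
      (h.crumChain_smooth (by omega) (h.seed_smooth _ hmem))
      (fun _ hz => h.crumChain_seed_ne_zero hk hz)
      (fun _ hz => h.deriv_crumChain_of_ker hk (h.crumChain_seed_eq_zero (by omega)) hz) heig)
    (fun z _ => qCoeff_succ k z) (fun _ hz => h.rCoeff_succ hp hq₀ hk hz)

/-- The chain carries eigenfunctions of `T₀` to eigenfunctions of `Tₖ`. -/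
theorem crumChain_eigenfunction (h : IsCrumSeed n U φ bf)
    (hp : ContDiffOn ℝ (⊤ : ℕ∞) p U) (hq₀ : ContDiffOn ℝ (⊤ : ℕ∞) q₀ U)
    (hr₀ : ContDiffOn ℝ (⊤ : ℕ∞) r₀ U) {lam : ℕ → ℝ}
    (heig : ∀ j ∈ Finset.Icc 1 n, ∀ z ∈ U, secondOrderOp p q₀ r₀ (φ j) z = lam j * φ j z)
    {k : ℕ} (hk : k ≤ n) : ∀ j ∈ Finset.Icc 1 n, ∀ z ∈ U,
      secondOrderOp p (qCoeff p q₀ bf k) (rCoeff p q₀ r₀ bf φ k) (crumChain φ bf k (φ j)) z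
        = lam j * crumChain φ bf k (φ j) z := by
  induction k with
  | zero =>
    intro j hj z hz
    have hσ : sigmaGauge bf 0 = fun _ => 0 := by ext x; simp [sigmaGauge]
    have hυ : upsGauge φ 0 = fun _ => 0 := by ext x; simp [upsGauge, wronskian_zero]
    rw [crumChain, ← heig j hj z hz]
    simp [secondOrderOp, qCoeff, rCoeff, hσ, hυ]
  | succ k ih =>
    intro j hj z hz
    have ih := ih (by omega)
    have hφ := h.crumChain_smooth (show k ≤ n by omega) (h.seed_smooth j hj)
    have hd := (Set.EqOn.hasDerivAt_of_isOpen h.isOpen (ih j hj) hz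
      ((hφ.hasDerivAt_of_isOpen h.isOpen hz).const_mul (lam j))).deriv
    rw [crumChain, ← h.intertwining_of_eigenfunction hp hq₀ hr₀ hk
      (ih (k + 1) (Finset.mem_Icc.2 ⟨by omega, hk⟩)) hφ z hz, firstOrderOp, firstOrderOp, hd,
      ih j hj z hz]
    ring

end IsCrumSeed

/-- generalized Crum formula — the operators `Tₖ` and intertwiners
`Aₖ = bₖ(D - wₖ)` defined from seed eigenfunctions and factorization gauges
satisfy `Aₖ T_{k-1} = Tₖ Aₖ` for `k = 1, …, n`. -/
theorem statement2 (n : ℕ) (a b : ℝ) (hab : a < b)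
    (p q₀ r₀ : ℝ → ℝ) (φ bf : ℕ → ℝ → ℝ) (lam : ℕ → ℝ)
    (hp : ContDiffOn ℝ (⊤ : ℕ∞) p (Ioo a b)) (hq₀ : ContDiffOn ℝ (⊤ : ℕ∞) q₀ (Ioo a b))
    (hr₀ : ContDiffOn ℝ (⊤ : ℕ∞) r₀ (Ioo a b))
    (hφ : ∀ j ∈ Finset.Icc 1 n, ContDiffOn ℝ (⊤ : ℕ∞) (φ j) (Ioo a b))
    (heig : ∀ j ∈ Finset.Icc 1 n, ∀ z ∈ Ioo a b,
      secondOrderOp p q₀ r₀ (φ j) z = lam j * φ j z)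
    (hdist : ∀ j ∈ Finset.Icc 1 n, ∀ k ∈ Finset.Icc 1 n, j ≠ k → lam j ≠ lam k)
    (hb : ∀ j ∈ Finset.Icc 1 n, ContDiffOn ℝ (⊤ : ℕ∞) (bf j) (Ioo a b))
    (hb0 : ∀ j ∈ Finset.Icc 1 n, ∀ z ∈ Ioo a b, bf j z ≠ 0)
    (hW : ∀ k ∈ Finset.Icc 1 n, ∀ z ∈ Ioo a b, wronskian φ k z ≠ 0) :
    ∀ k ∈ Finset.Icc 1 n, ∀ y : ℝ → ℝ, ContDiffOn ℝ (⊤ : ℕ∞) y (Ioo a b) →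
      ∀ z ∈ Ioo a b,
        firstOrderOp (bf k) (wFact bf φ k)
            (secondOrderOp p (qCoeff p q₀ bf (k - 1)) (rCoeff p q₀ r₀ bf φ (k - 1)) y) z
          = secondOrderOp p (qCoeff p q₀ bf k) (rCoeff p q₀ r₀ bf φ k)
              (firstOrderOp (bf k) (wFact bf φ k) y) z := by
  intro k hk y hy z hz
  have hseed : IsCrumSeed n (Ioo a b) φ bf := ⟨isOpen_Ioo, hφ, hb, hb0, hW⟩
  obtain ⟨hk1, hkn⟩ := Finset.mem_Icc.1 hk
  obtain ⟨k, rfl⟩ : ∃ l, k = l + 1 := ⟨k - 1, by omega⟩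
  exact hseed.intertwining_of_eigenfunction hp hq₀ hr₀ hkn
    (hseed.crumChain_eigenfunction hp hq₀ hr₀ heig (by omega) (k + 1) hk) hy z hz
end

section
/- Let I ⊆ ℝ be an open interval, p, q₀, r₀ : I → ℝ smooth, T₀ y = p·y'' + q₀·y' + r₀·y, and let φ₁, …, φₙ : I → ℝ be smooth with T₀φⱼ = λⱼφⱼ for pairwise distinct constants λ₁, …, λₙ. For 1 ≤ k ≤ n let Wₖ(z) = det[(d/dz)^{j-1}φᵢ(z)]_{1≤i,j≤k} be the Wronskian of φ₁, …, φₖ, assumed nonvanishing on I, and set υₖ = Wₖ'/Wₖ (with υ₀ = 0), w̃ₖ = υₖ - υ_{k-1}, and Ãₖ y = y' - w̃ₖ·y. Then for all 2 ≤ k ≤ j ≤ n, the composition (Ã_{k-1} ∘ Ã_{k-2} ∘ ⋯ ∘ Ã₁)φⱼ equals the quotient of Wronskians W(φ₁, …, φ_{k-1}, φⱼ) / W(φ₁, …, φ_{k-1}) on I. -/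
open Set

/-- Wronskian of `φ 1, …, φ k, φ j` (a `(k+1) × (k+1)` determinant). -/
noncomputable def wronskianWith (φ : ℕ → ℝ → ℝ) (k j : ℕ) (z : ℝ) : ℝ :=
  (Matrix.of fun i c : Fin (k + 1) =>
    iteratedDeriv (c : ℕ) (if i.1 < k then φ (i.1 + 1) else φ j) z).det

/-- `chain φ j k = (Ãₖ ∘ ⋯ ∘ Ã₁) φⱼ`, where `Ãₘ y = y' - (υₘ - υ_{m-1}) y`. -/
noncomputable def chainA (φ : ℕ → ℝ → ℝ) (j : ℕ) : ℕ → ℝ → ℝ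
  | 0 => φ j
  | k + 1 => fun z =>
      deriv (chainA φ j k) z - (upsGauge φ (k + 1) z - upsGauge φ k z) * chainA φ j k z

/-- The derivative of a determinant is the sum over rows of the determinants in which that row is
replaced by its derivative. -/
lemma hasDerivAt_det {m : ℕ} {M : ℝ → Matrix (Fin m) (Fin m) ℝ} {M' : Matrix (Fin m) (Fin m) ℝ}
    {z : ℝ} (h : ∀ i j, HasDerivAt (fun x => M x i j) (M' i j) z) :
    HasDerivAt (fun x => (M x).det) (∑ i, ((M z).updateRow i (M' i)).det) z := by
  let f : ContinuousMultilinearMap ℝ (fun _ : Fin m => Fin m → ℝ) ℝ :=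
    { toMultilinearMap := (Matrix.detRowAlternating (R := ℝ) (n := Fin m)).toMultilinearMap
      cont := continuous_id.matrix_det }
  have hrow : ∀ i, HasFDerivAt (fun x => M x i) (ContinuousLinearMap.toSpanSingleton ℝ (M' i)) z :=
    fun i => (hasDerivAt_pi.2 (h i)).hasFDerivAt
  refine (HasFDerivAt.multilinear_comp f hrow).hasDerivAt.congr_deriv ?_
  simp
  rfl

/-- Differentiating a Wronskian only raises the order of the last column. -/
lemma hasDerivAt_det_iteratedDeriv {k : ℕ} {ψ : Fin (k + 1) → ℝ → ℝ} {z : ℝ}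
    (hψ : ∀ i, ContDiffAt ℝ (⊤ : ℕ∞) (ψ i) z) :
    HasDerivAt
      (fun x => (Matrix.of fun i c : Fin (k + 1) => iteratedDeriv (c : ℕ) (ψ i) x).det)
      (Matrix.of fun i c : Fin (k + 1) =>
        iteratedDeriv (if (c : ℕ) < k then (c : ℕ) else k + 1) (ψ i) z).det z := by
  have hd : ∀ i (c : ℕ), HasDerivAt (iteratedDeriv c (ψ i)) (iteratedDeriv (c + 1) (ψ i) z) z := by
    intro i c
    rw [iteratedDeriv_succ]
    apply DifferentiableAt.hasDerivAt
    rw [iteratedDeriv_eq_equiv_comp, LinearIsometryEquiv.comp_differentiableAt_iff]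
    exact (hψ i).differentiableAt_iteratedFDeriv (mod_cast WithTop.coe_lt_top c)
  have := hasDerivAt_det (M := fun x => (Matrix.of fun i c : Fin (k + 1) =>
    iteratedDeriv (c : ℕ) (ψ i) x).transpose)
    (M' := (Matrix.of fun i c : Fin (k + 1) => iteratedDeriv (c + 1 : ℕ) (ψ i) z).transpose)
    (z := z) (fun i j => hd j i)
  simp only [Matrix.det_transpose] at this
  refine this.congr_deriv ?_
  rw [Fin.sum_univ_castSucc, Finset.sum_eq_zero, zero_add, ← Matrix.det_transpose]
  · congr 1
    ext i c
    refine Fin.lastCases ?_ (fun c => ?_) c <;> simp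
  · intro c _
    refine Matrix.det_zero_of_row_eq (i := c.castSucc) (j := c.succ) (Fin.castSucc_lt_succ).ne ?_
    rw [Matrix.updateRow_self, Matrix.updateRow_ne (Fin.castSucc_lt_succ).ne']
    ext i
    simp

/-- The **Desnanot–Jacobi identity** for a `2 × 2` border of an invertible matrix. -/
lemma det_fromBlocks_mul_det {m K : Type*} [Fintype m] [DecidableEq m] [Field K]
    (A : Matrix m m K) (hA : A.det ≠ 0) (B : Matrix m (Fin 2) K) (C : Matrix (Fin 2) m K)
    (D : Matrix (Fin 2) (Fin 2) K) :
    (Matrix.fromBlocks A B C D).det * A.det =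
      let b (i j : Fin 2) : K := (Matrix.fromBlocks A (B.submatrix id fun _ : Fin 1 => j)
        (C.submatrix (fun _ : Fin 1 => i) id) (Matrix.of fun _ _ => D i j)).det
      b 0 0 * b 1 1 - b 0 1 * b 1 0 := by
  have := A.invertibleOfIsUnitDet hA.isUnit
  have hb : ∀ i j : Fin 2, (Matrix.fromBlocks A (B.submatrix id fun _ : Fin 1 => j)
      (C.submatrix (fun _ : Fin 1 => i) id) (Matrix.of fun _ _ => D i j)).det =
      A.det * (D - C * ⅟A * B) i j := by
    intro i j
    rw [Matrix.det_fromBlocks₁₁]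
    simp [Matrix.mul_apply]
  simp only [hb, Matrix.det_fromBlocks₁₁, Matrix.det_fin_two]
  ring

/-- The Wronskian matrix of `φ 1, …, φ k` bordered by a row of derivatives of `f` and a column of
derivatives of order `d`, as a matrix over `Fin (k + 1)`. -/
lemma det_fromBlocks_iteratedDeriv (φ : ℕ → ℝ → ℝ) (f : ℝ → ℝ) (k d : ℕ) (z : ℝ) :
    (Matrix.fromBlocks (Matrix.of fun i c : Fin k => iteratedDeriv (c : ℕ) (φ (i.1 + 1)) z)
      (Matrix.of fun (i : Fin k) (_ : Fin 1) => iteratedDeriv d (φ (i.1 + 1)) z)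
      (Matrix.of fun (_ : Fin 1) (c : Fin k) => iteratedDeriv (c : ℕ) f z)
      (Matrix.of fun _ _ => iteratedDeriv d f z)).det =
    (Matrix.of fun i c : Fin (k + 1) =>
      iteratedDeriv (if (c : ℕ) < k then (c : ℕ) else d)
        (if i.1 < k then φ (i.1 + 1) else f) z).det := by
  rw [← Matrix.det_submatrix_equiv_self (finSumFinEquiv (m := k) (n := 1)) (Matrix.of _)]
  congr 1
  ext i c
  rcases i with i | i <;> rcases c with c | c <;> simp

lemma wronskianWith_self (φ : ℕ → ℝ → ℝ) (k : ℕ) :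
    wronskianWith φ k (k + 1) = wronskian φ (k + 1) := by
  funext z
  unfold wronskianWith wronskian
  congr 1
  ext i c
  by_cases h : i.1 < k
  · simp [h]
  · simp [show i.1 = k by omega]

lemma hasDerivAt_wronskianWith {φ : ℕ → ℝ → ℝ} {k j : ℕ} {z : ℝ}
    (hφ : ∀ i, 1 ≤ i → i ≤ k → ContDiffAt ℝ (⊤ : ℕ∞) (φ i) z)
    (hj : ContDiffAt ℝ (⊤ : ℕ∞) (φ j) z) :
    HasDerivAt (wronskianWith φ k j)
      (Matrix.of fun i c : Fin (k + 1) =>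
        iteratedDeriv (if (c : ℕ) < k then (c : ℕ) else k + 1)
          (if i.1 < k then φ (i.1 + 1) else φ j) z).det z := by
  refine hasDerivAt_det_iteratedDeriv fun i => ?_
  split_ifs with h
  · exact hφ _ (by omega) (by omega)
  · exact hj

/-- A Jacobi-type identity: `W(φ₁,…,φₖ₊₁,φⱼ) Wₖ` is the Wronskian of `Wₖ₊₁` and
`W(φ₁,…,φₖ,φⱼ)`. -/
lemma wronskianWith_succ_mul_wronskian {φ : ℕ → ℝ → ℝ} {k j : ℕ} {z : ℝ}
    (hφ : ∀ i, 1 ≤ i → i ≤ k + 1 → ContDiffAt ℝ (⊤ : ℕ∞) (φ i) z)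
    (hj : ContDiffAt ℝ (⊤ : ℕ∞) (φ j) z) (hW : wronskian φ k z ≠ 0) :
    wronskianWith φ (k + 1) j z * wronskian φ k z =
      wronskian φ (k + 1) z * deriv (wronskianWith φ k j) z -
        deriv (wronskian φ (k + 1)) z * wronskianWith φ k j z := by
  have hcol : ∀ f : ℝ → ℝ, (Matrix.of fun i c : Fin (k + 1) =>
      iteratedDeriv (c : ℕ) (if i.1 < k then φ (i.1 + 1) else f) z) =
      Matrix.of fun i c : Fin (k + 1) => iteratedDeriv (if (c : ℕ) < k then (c : ℕ) else k)
        (if i.1 < k then φ (i.1 + 1) else f) z := by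
    intro f
    ext i c
    by_cases h : c.1 < k
    · simp [h]
    · simp [show c.1 = k by omega]
  have hφ' : ∀ i, 1 ≤ i → i ≤ k → ContDiffAt ℝ (⊤ : ℕ∞) (φ i) z :=
    fun i h₁ h₂ => hφ i h₁ (by omega)
  rw [← wronskianWith_self, (hasDerivAt_wronskianWith hφ' hj).deriv,
    (hasDerivAt_wronskianWith hφ' (hφ (k + 1) (by omega) le_rfl)).deriv]
  have key := det_fromBlocks_mul_det
    (Matrix.of fun i c : Fin k => iteratedDeriv (c : ℕ) (φ (i.1 + 1)) z) hW
    (Matrix.of fun (i : Fin k) (c : Fin 2) => iteratedDeriv (k + c) (φ (i.1 + 1)) z)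
    (Matrix.of fun (r : Fin 2) (c : Fin k) =>
      iteratedDeriv (c : ℕ) (if r = 0 then φ (k + 1) else φ j) z)
    (Matrix.of fun r c : Fin 2 => iteratedDeriv (k + c) (if r = 0 then φ (k + 1) else φ j) z)
  have hbig : wronskianWith φ (k + 1) j z = (Matrix.fromBlocks
    (Matrix.of fun i c : Fin k => iteratedDeriv (c : ℕ) (φ (i.1 + 1)) z)
    (Matrix.of fun (i : Fin k) (c : Fin 2) => iteratedDeriv (k + c) (φ (i.1 + 1)) z)
    (Matrix.of fun (r : Fin 2) (c : Fin k) =>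
      iteratedDeriv (c : ℕ) (if r = 0 then φ (k + 1) else φ j) z)
    (Matrix.of fun r c : Fin 2 =>
      iteratedDeriv (k + c) (if r = 0 then φ (k + 1) else φ j) z)).det := by
    unfold wronskianWith
    rw [← Matrix.det_submatrix_equiv_self (finSumFinEquiv (m := k) (n := 2)) (Matrix.of _)]
    congr 1
    ext i c
    rcases i with i | i <;> rcases c with c | c <;>
      first
      | (fin_cases i <;> simp)
      | simp
  rw [hbig, wronskian, key]
  unfold wronskianWith
  simp only [hcol, ← det_fromBlocks_iteratedDeriv]
  rfl

/-- for `2 ≤ k ≤ j ≤ n`,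
`(Ã_{k-1} ∘ ⋯ ∘ Ã₁)φⱼ = W(φ₁,…,φ_{k-1},φⱼ)/W(φ₁,…,φ_{k-1})`. -/
theorem statement3 (n : ℕ) (a b : ℝ) (hab : a < b)
    (p q₀ r₀ : ℝ → ℝ) (φ : ℕ → ℝ → ℝ) (lam : ℕ → ℝ)
    (hp : ContDiffOn ℝ (⊤ : ℕ∞) p (Ioo a b)) (hq₀ : ContDiffOn ℝ (⊤ : ℕ∞) q₀ (Ioo a b))
    (hr₀ : ContDiffOn ℝ (⊤ : ℕ∞) r₀ (Ioo a b))
    (hφ : ∀ j ∈ Finset.Icc 1 n, ContDiffOn ℝ (⊤ : ℕ∞) (φ j) (Ioo a b))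
    (heig : ∀ j ∈ Finset.Icc 1 n, ∀ z ∈ Ioo a b,
      p z * deriv (deriv (φ j)) z + q₀ z * deriv (φ j) z + r₀ z * φ j z = lam j * φ j z)
    (hdist : ∀ j ∈ Finset.Icc 1 n, ∀ k ∈ Finset.Icc 1 n, j ≠ k → lam j ≠ lam k)
    (hW : ∀ k ∈ Finset.Icc 1 n, ∀ z ∈ Ioo a b, wronskian φ k z ≠ 0) :
    ∀ k j : ℕ, 2 ≤ k → k ≤ j → j ≤ n → ∀ z ∈ Ioo a b,
      chainA φ j (k - 1) z = wronskianWith φ (k - 1) j z / wronskian φ (k - 1) z := by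
  have hsmooth : ∀ i, 1 ≤ i → i ≤ n → ∀ z ∈ Ioo a b, ContDiffAt ℝ (⊤ : ℕ∞) (φ i) z :=
    fun i h₁ h₂ z hz => (hφ i (Finset.mem_Icc.2 ⟨h₁, h₂⟩)).contDiffAt (isOpen_Ioo.mem_nhds hz)
  have hW' : ∀ k ≤ n, ∀ z ∈ Ioo a b, wronskian φ k z ≠ 0 := by
    intro k hk z hz
    rcases k with _ | k
    · simp [wronskian]
    · exact hW _ (Finset.mem_Icc.2 ⟨by omega, hk⟩) z hz
  have main : ∀ j ≤ n, ∀ k < j, ∀ z ∈ Ioo a b,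
      chainA φ j k z = wronskianWith φ k j z / wronskian φ k z := by
    intro j hj k
    induction k with
    | zero =>
      intro _ z _
      simp [chainA, wronskianWith, wronskian]
    | succ k ih =>
      intro hk z hz
      have ih := ih (by omega)
      have hsm : ∀ i, 1 ≤ i → i ≤ k + 1 → ContDiffAt ℝ (⊤ : ℕ∞) (φ i) z :=
        fun i h₁ h₂ => hsmooth i h₁ (by omega) z hz
      have hsj := hsmooth j (by omega) hj z hz
      have h₀ := hW' k (by omega) z hz
      have h₁ := hW' (k + 1) (by omega) z hz
      have hN := (hasDerivAt_wronskianWith (fun i h₁ h₂ => hsm i h₁ (by omega)) hsj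
        (k := k)).differentiableAt.hasDerivAt
      have hWk : HasDerivAt (wronskian φ k) (deriv (wronskian φ k) z) z := by
        refine DifferentiableAt.hasDerivAt ?_
        rcases k with _ | k
        · have : wronskian φ 0 = fun _ => 1 := by funext x; simp [wronskian]
          rw [this]
          exact differentiableAt_const _
        · rw [← wronskianWith_self]
          exact (hasDerivAt_wronskianWith (fun i h₁ h₂ => hsm i h₁ (by omega))
            (hsm (k + 1) (by omega) (by omega))).differentiableAt
      have heq : chainA φ j k =ᶠ[nhds z] fun x => wronskianWith φ k j x / wronskian φ k x := by
        filter_upwards [isOpen_Ioo.mem_nhds hz] with x hx using ih x hx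
      have hJ := wronskianWith_succ_mul_wronskian hsm hsj h₀
      simp only [chainA, upsGauge]
      rw [heq.deriv_eq, (hN.fun_div hWk h₀).deriv, ih z hz, eq_div_iff h₁]
      field_simp
      linear_combination -wronskian φ k z * hJ
  intro k j hk hkj hjn z hz
  exact main j hjn (k - 1) (by omega) z hz
end

section
/- Let I ⊆ ℝ be an open interval, p, q₀, r₀ : I → ℝ smooth, T₀ y = p·y'' + q₀·y' + r₀·y, and let φ₁, …, φₙ : I → ℝ be smooth with T₀φⱼ = λⱼφⱼ for pairwise distinct constants λ₁, …, λₙ. Let Wₖ(z) = det[(d/dz)^{j-1}φᵢ(z)]_{1≤i,j≤k} be the Wronskian of φ₁, …, φₖ, assumed nonvanishing on I, and set υₖ = Wₖ'/Wₖ (υ₀ = 0), w̃ₖ = υₖ - υ_{k-1}, Ãₖ y = y' - w̃ₖ·y, q̃ₖ = q₀ + k·p', r̃ₖ = r₀ + k·q₀' + ½k(k-1)·p'' + υₖ·p' + 2υₖ'·p, and T̃ₖ y = p·y'' + q̃ₖ·y' + r̃ₖ·y (with T̃₀ = T₀). Then for each k = 1, …, n and every smooth y : I → ℝ, Ãₖ(T̃_{k-1}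 y) = T̃ₖ(Ãₖ y) on I. -/
open Set

/-- `w̃ₖ = υₖ - υ_{k-1}`. -/
noncomputable def wTilde (φ : ℕ → ℝ → ℝ) (k : ℕ) (z : ℝ) : ℝ :=
  upsGauge φ k z - upsGauge φ (k - 1) z

/-- `q̃ₖ = q₀ + k p'`. -/
noncomputable def qTilde (p q₀ : ℝ → ℝ) (k : ℕ) (z : ℝ) : ℝ :=
  q₀ z + k * deriv p z

/-- `r̃ₖ = r₀ + k q₀' + ½k(k-1)p'' + υₖ p' + 2 υₖ' p`. -/
noncomputable def rTilde (p q₀ r₀ : ℝ → ℝ) (φ : ℕ → ℝ → ℝ) (k : ℕ) (z : ℝ) : ℝ :=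
  r₀ z + k * deriv q₀ z + (1 / 2 : ℝ) * k * (k - 1) * deriv (deriv p) z
    + upsGauge φ k z * deriv p z + 2 * deriv (upsGauge φ k) z * p z

section SmoothOnOpen

variable {U : Set ℝ}

theorem ContDiffOn.top_deriv_of_isOpen {f : ℝ → ℝ} (hf : ContDiffOn ℝ (⊤ : ℕ∞) f U)
    (hU : IsOpen U) : ContDiffOn ℝ (⊤ : ℕ∞) (deriv f) U :=
  hf.deriv_of_isOpen hU (by norm_cast)

theorem ContDiffOn.top_iteratedDeriv_of_isOpen {f : ℝ → ℝ} (hf : ContDiffOn ℝ (⊤ : ℕ∞) f U)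
    (hU : IsOpen U) (k : ℕ) : ContDiffOn ℝ (⊤ : ℕ∞) (iteratedDeriv k f) U := by
  induction k with
  | zero => simpa using hf
  | succ k ih => simpa [iteratedDeriv_succ] using ih.top_deriv_of_isOpen hU

theorem ContDiffOn.top_hasDerivAt_of_isOpen {f : ℝ → ℝ} (hf : ContDiffOn ℝ (⊤ : ℕ∞) f U)
    (hU : IsOpen U) {z : ℝ} (hz : z ∈ U) : HasDerivAt f (deriv f z) z :=
  ((hf.contDiffAt (hU.mem_nhds hz)).differentiableAt (by simp)).hasDerivAt

theorem deriv_eq_of_eqOn_isOpen {f g : ℝ → ℝ} (h : EqOn f g U) (hU : IsOpen U) {z : ℝ}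
    (hz : z ∈ U) : deriv f z = deriv g z :=
  (h.eventuallyEq_of_mem (hU.mem_nhds hz)).deriv_eq

end SmoothOnOpen

/-- Darboux intertwining: if `Tψ = lψ` with `ψ` nonvanishing and `w = ψ'/ψ`, then
`(D - w) T = T̂ (D - w)`, where `T̂` has coefficients `p`, `q + p'` and `r + q' + w p' + 2 w' p`. -/
theorem darboux_intertwining {U : Set ℝ} (hU : IsOpen U) {p q r w ψ Q R y : ℝ → ℝ} {l : ℝ}
    (hp : ContDiffOn ℝ (⊤ : ℕ∞) p U) (hq : ContDiffOn ℝ (⊤ : ℕ∞) q U)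
    (hr : ContDiffOn ℝ (⊤ : ℕ∞) r U) (hw : ContDiffOn ℝ (⊤ : ℕ∞) w U)
    (hψ : ContDiffOn ℝ (⊤ : ℕ∞) ψ U) (hy : ContDiffOn ℝ (⊤ : ℕ∞) y U)
    (hψ0 : ∀ z ∈ U, ψ z ≠ 0) (hTψ : ∀ z ∈ U, secondOrderOp p q r ψ z = l * ψ z)
    (hwψ : ∀ z ∈ U, w z * ψ z = deriv ψ z)
    (hQ : ∀ z ∈ U, Q z = q z + deriv p z)
    (hR : ∀ z ∈ U, R z = r z + deriv q z + w z * deriv p z + 2 * deriv w z * p z)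
    {z : ℝ} (hz : z ∈ U) :
    deriv (secondOrderOp p q r y) z - w z * secondOrderOp p q r y z
      = secondOrderOp p Q R (fun x => deriv y x - w x * y x) z := by
  have riccati : EqOn (fun x => p x * (deriv w x + w x * w x) + q x * w x + r x)
      (fun _ => l) U := by
    intro x hx
    have hψ'' : deriv w x * ψ x + w x * deriv ψ x = deriv (deriv ψ) x :=
      (((hw.top_hasDerivAt_of_isOpen hU hx).mul (hψ.top_hasDerivAt_of_isOpen hU hx)).deriv).symm.trans
        (deriv_eq_of_eqOn_isOpen (f := w * ψ) (fun t ht => hwψ t ht) hU hx)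
    apply mul_right_cancel₀ (hψ0 x hx)
    have hT := hTψ x hx
    simp only [secondOrderOp, ← hψ'', ← hwψ x hx] at hT
    linear_combination hT
  have dp := hp.top_hasDerivAt_of_isOpen hU hz
  have dq := hq.top_hasDerivAt_of_isOpen hU hz
  have dr := hr.top_hasDerivAt_of_isOpen hU hz
  have dw := hw.top_hasDerivAt_of_isOpen hU hz
  have hw' := hw.top_deriv_of_isOpen hU
  have dw' := hw'.top_hasDerivAt_of_isOpen hU hz
  have hy' := hy.top_deriv_of_isOpen hU
  have hy'' := hy'.top_deriv_of_isOpen hU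
  have dy := hy.top_hasDerivAt_of_isOpen hU hz
  have dy' := hy'.top_hasDerivAt_of_isOpen hU hz
  have dy'' := hy''.top_hasDerivAt_of_isOpen hU hz
  have riccati' := deriv_eq_of_eqOn_isOpen riccati hU hz
  have dRiccati : HasDerivAt (fun x => p x * (deriv w x + w x * w x) + q x * w x + r x) _ z :=
    ((dp.mul (dw'.add (dw.mul dw))).add (dq.mul dw)).add dr
  rw [dRiccati.deriv, deriv_const] at riccati'
  have dT : HasDerivAt (secondOrderOp p q r y) _ z :=
    ((dp.mul dy'').add (dq.mul dy')).add (dr.mul dy)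
  have dA : EqOn (deriv fun x => deriv y x - w x * y x)
      (fun x => deriv (deriv y) x - (deriv w x * y x + w x * deriv y x)) U := fun x hx =>
    ((hy'.top_hasDerivAt_of_isOpen hU hx).sub
      ((hw.top_hasDerivAt_of_isOpen hU hx).mul (hy.top_hasDerivAt_of_isOpen hU hx))).deriv
  have dA' : HasDerivAt
      (fun x => deriv (deriv y) x - (deriv w x * y x + w x * deriv y x)) _ z :=
    dy''.sub ((dw'.mul dy).add (dw.mul dy'))
  rw [dT.deriv]
  simp only [secondOrderOp, deriv_eq_of_eqOn_isOpen dA hU hz, dA'.deriv, dA hz, hQ z hz, hR z hz]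
  simp only [Pi.add_apply, Pi.mul_apply] at riccati'
  linear_combination y z * riccati'

/-- The composition `Ãₖ ⋯ Ã₁` of the first-order operators `Ãₖ y = y' - w̃ₖ y`. -/
noncomputable def darbouxChain (φ : ℕ → ℝ → ℝ) : ℕ → (ℝ → ℝ) → ℝ → ℝ
  | 0, y => y
  | k + 1, y => fun z => deriv (darbouxChain φ k y) z - wTilde φ (k + 1) z * darbouxChain φ k y z

theorem upsGauge_zero (φ : ℕ → ℝ → ℝ) : upsGauge φ 0 = fun _ => 0 := by
  funext z
  simp [upsGauge, wronskian_zero]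

section Chain

variable {U : Set ℝ} {φ : ℕ → ℝ → ℝ}

theorem contDiffOn_wronskian (hU : IsOpen U) {k : ℕ}
    (hφ : ∀ j ∈ Finset.Icc 1 k, ContDiffOn ℝ (⊤ : ℕ∞) (φ j) U) :
    ContDiffOn ℝ (⊤ : ℕ∞) (wronskian φ k) U := by
  unfold wronskian
  simp only [Matrix.det_apply', Matrix.of_apply]
  refine ContDiffOn.sum fun σ _ => contDiffOn_const.mul (contDiffOn_prod fun i _ => ?_)
  exact (hφ _ (by simp only [Finset.mem_Icc]; omega)).top_iteratedDeriv_of_isOpen hU _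

theorem contDiffOn_upsGauge (hU : IsOpen U) {k : ℕ}
    (hφ : ∀ j ∈ Finset.Icc 1 k, ContDiffOn ℝ (⊤ : ℕ∞) (φ j) U)
    (hW : ∀ z ∈ U, wronskian φ k z ≠ 0) :
    ContDiffOn ℝ (⊤ : ℕ∞) (upsGauge φ k) U :=
  have h := contDiffOn_wronskian hU hφ
  (h.top_deriv_of_isOpen hU).div h hW

theorem contDiffOn_darbouxChain (hU : IsOpen U) {k : ℕ}
    (hw : ∀ j ∈ Finset.Icc 1 k, ContDiffOn ℝ (⊤ : ℕ∞) (wTilde φ j) U)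
    {y : ℝ → ℝ} (hy : ContDiffOn ℝ (⊤ : ℕ∞) y U) :
    ContDiffOn ℝ (⊤ : ℕ∞) (darbouxChain φ k y) U := by
  induction k with
  | zero => exact hy
  | succ k ih =>
    have h := ih fun j hj => hw j (Finset.Icc_subset_Icc_right k.le_succ hj)
    exact (h.top_deriv_of_isOpen hU).sub ((hw (k + 1) (by simp)).mul h)

/-- `Ãₖ ⋯ Ã₁` is a monic linear differential operator of order `k`. -/
theorem exists_darbouxChain_eq_sum (hU : IsOpen U) {k : ℕ}
    (hw : ∀ j ∈ Finset.Icc 1 k, ContDiffOn ℝ (⊤ : ℕ∞) (wTilde φ j) U) :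
    ∃ c : ℕ → ℝ → ℝ, (∀ j, ContDiffOn ℝ (⊤ : ℕ∞) (c j) U) ∧ c k = (fun _ => 1) ∧
      (∀ j, k < j → c j = fun _ => 0) ∧
      ∀ y, ContDiffOn ℝ (⊤ : ℕ∞) y U → ∀ z ∈ U,
        darbouxChain φ k y z = ∑ j ∈ Finset.range (k + 1), c j z * iteratedDeriv j y z := by
  induction k with
  | zero =>
    refine ⟨fun j _ => if j = 0 then 1 else 0, fun j => contDiffOn_const, by simp, ?_, ?_⟩
    · intro j hj
      simp [hj.ne']
    · intro y _ z _
      simp [darbouxChain]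
  | succ k ih =>
    obtain ⟨c, hc, hck, hc0, hsum⟩ :=
      ih fun j hj => hw j (Finset.Icc_subset_Icc_right k.le_succ hj)
    have hwk := hw (k + 1) (by simp)
    refine ⟨fun j z => (deriv (c j) z - wTilde φ (k + 1) z * c j z)
      + (if j = 0 then 0 else c (j - 1) z), fun j => ?_, ?_, ?_, ?_⟩
    · refine (((hc j).top_deriv_of_isOpen hU).sub (hwk.mul (hc j))).add ?_
      by_cases hj : j = 0
      · simpa [hj] using contDiffOn_const
      · simpa [hj] using hc (j - 1)
    · funext z
      simp [hc0 (k + 1) k.lt_succ_self, hck]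
    · intro j hj
      funext z
      simp [hc0 j (by omega), hc0 (j - 1) (by omega)]
    · intro y hy z hz
      have hEq : EqOn (darbouxChain φ k y)
          (fun z => ∑ j ∈ Finset.range (k + 1), c j z * iteratedDeriv j y z) U := hsum y hy
      have hd : HasDerivAt (fun z => ∑ j ∈ Finset.range (k + 1), c j z * iteratedDeriv j y z)
          (∑ j ∈ Finset.range (k + 1),
            (deriv (c j) z * iteratedDeriv j y z + c j z * iteratedDeriv (j + 1) y z)) z := by
        refine HasDerivAt.fun_sum fun j _ => ?_
        rw [iteratedDeriv_succ]
        exact ((hc j).top_hasDerivAt_of_isOpen hU hz).mul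
          ((hy.top_iteratedDeriv_of_isOpen hU j).top_hasDerivAt_of_isOpen hU hz)
      simp only [darbouxChain]
      rw [deriv_eq_of_eqOn_isOpen hEq hU hz, hd.deriv, hEq hz]
      simp only [add_mul, sub_mul, Finset.sum_add_distrib, Finset.sum_sub_distrib]
      rw [Finset.sum_range_succ _ (k + 1), Finset.sum_range_succ _ (k + 1),
        Finset.sum_range_succ' (fun j => (if j = 0 then 0 else c (j - 1) z) * _) (k + 1)]
      simp [hc0 (k + 1) k.lt_succ_self, Finset.mul_sum, mul_assoc]
      ring

/-- If `Ãₖ ⋯ Ã₁` kills `φ₁, …, φₖ`, then it maps `φₖ₊₁` to `Wₖ₊₁ / Wₖ`. -/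
theorem wronskian_succ_eq_mul_darbouxChain (hU : IsOpen U) {k : ℕ}
    (hφ : ∀ j ∈ Finset.Icc 1 (k + 1), ContDiffOn ℝ (⊤ : ℕ∞) (φ j) U)
    (hw : ∀ j ∈ Finset.Icc 1 k, ContDiffOn ℝ (⊤ : ℕ∞) (wTilde φ j) U)
    (hker : ∀ j ∈ Finset.Icc 1 k, ∀ z ∈ U, darbouxChain φ k (φ j) z = 0) {z : ℝ} (hz : z ∈ U) :
    wronskian φ (k + 1) z = wronskian φ k z * darbouxChain φ k (φ (k + 1)) z := by
  obtain ⟨c, -, hck, -, hsum⟩ := exists_darbouxChain_eq_sum hU hw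
  set M : Matrix (Fin (k + 1)) (Fin (k + 1)) ℝ :=
    Matrix.of fun i j => iteratedDeriv (j : ℕ) (φ (i.1 + 1)) z with hM
  have hcol : (fun i => ∑ j, c j.1 z • M i j)
      = fun i : Fin (k + 1) => darbouxChain φ k (φ (i.1 + 1)) z := by
    funext i
    rw [hsum _ (hφ _ (by simp only [Finset.mem_Icc]; omega)) z hz, Finset.sum_range]
    simp [hM]
  have hdet := Matrix.det_updateCol_sum M (Fin.last k) (fun j => c j.1 z)
  rw [hcol] at hdet
  simp only [Fin.val_last, hck, one_smul] at hdet
  change M.det = _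
  rw [← hdet, Matrix.det_succ_column _ (Fin.last k), Fin.sum_univ_castSucc]
  have hzero : ∀ i : Fin k, darbouxChain φ k (φ (i.1 + 1)) z = 0 := fun i =>
    hker _ (by simp only [Finset.mem_Icc]; omega) z hz
  have hsub : (Matrix.updateCol M (Fin.last k)
      fun i => darbouxChain φ k (φ (i.1 + 1)) z).submatrix Fin.castSucc Fin.castSucc
      = Matrix.of fun i j : Fin k => iteratedDeriv (j : ℕ) (φ (i.1 + 1)) z := by
    ext i j
    simp [hM, Fin.castSucc_ne_last]
  simp [hzero, wronskian, Fin.succAbove_last, hsub, ← two_mul, mul_comm]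

end Chain

/-- in the restricted gauge `b₁ = ⋯ = bₙ = 1`, the operators
`T̃ₖ = pD² + q̃ₖD + r̃ₖ` satisfy the intertwining relations `Ãₖ T̃_{k-1} = T̃ₖ Ãₖ`
with `Ãₖ y = y' - w̃ₖ y`. -/
theorem statement4 (n : ℕ) (a b : ℝ) (hab : a < b)
    (p q₀ r₀ : ℝ → ℝ) (φ : ℕ → ℝ → ℝ) (lam : ℕ → ℝ)
    (hp : ContDiffOn ℝ (⊤ : ℕ∞) p (Ioo a b)) (hq₀ : ContDiffOn ℝ (⊤ : ℕ∞) q₀ (Ioo a b))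
    (hr₀ : ContDiffOn ℝ (⊤ : ℕ∞) r₀ (Ioo a b))
    (hφ : ∀ j ∈ Finset.Icc 1 n, ContDiffOn ℝ (⊤ : ℕ∞) (φ j) (Ioo a b))
    (heig : ∀ j ∈ Finset.Icc 1 n, ∀ z ∈ Ioo a b,
      secondOrderOp p q₀ r₀ (φ j) z = lam j * φ j z)
    (hdist : ∀ j ∈ Finset.Icc 1 n, ∀ k ∈ Finset.Icc 1 n, j ≠ k → lam j ≠ lam k)
    (hW : ∀ k ∈ Finset.Icc 1 n, ∀ z ∈ Ioo a b, wronskian φ k z ≠ 0) :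
    ∀ k ∈ Finset.Icc 1 n, ∀ y : ℝ → ℝ, ContDiffOn ℝ (⊤ : ℕ∞) y (Ioo a b) →
      ∀ z ∈ Ioo a b,
        deriv (secondOrderOp p (qTilde p q₀ (k - 1)) (rTilde p q₀ r₀ φ (k - 1)) y) z
            - wTilde φ k z
              * secondOrderOp p (qTilde p q₀ (k - 1)) (rTilde p q₀ r₀ φ (k - 1)) y z
          = secondOrderOp p (qTilde p q₀ k) (rTilde p q₀ r₀ φ k)
              (fun x => deriv y x - wTilde φ k x * y x) z := by
  have hU : IsOpen (Ioo a b) := isOpen_Ioo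
  have hW' : ∀ k ≤ n, ∀ z ∈ Ioo a b, wronskian φ k z ≠ 0 := by
    intro k hk z hz
    rcases Nat.eq_zero_or_pos k with rfl | hpos
    · simp [wronskian_zero]
    · exact hW k (Finset.mem_Icc.2 ⟨hpos, hk⟩) z hz
  have hφ' : ∀ k ≤ n, ∀ j ∈ Finset.Icc 1 k, ContDiffOn ℝ (⊤ : ℕ∞) (φ j) (Ioo a b) :=
    fun k hk j hj => hφ j (Finset.Icc_subset_Icc_right hk hj)
  have hυ : ∀ k ≤ n, ContDiffOn ℝ (⊤ : ℕ∞) (upsGauge φ k) (Ioo a b) :=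
    fun k hk => contDiffOn_upsGauge hU (hφ' k hk) (hW' k hk)
  have hw : ∀ k ≤ n, ContDiffOn ℝ (⊤ : ℕ∞) (wTilde φ k) (Ioo a b) :=
    fun k hk => (hυ k hk).sub (hυ (k - 1) (by omega))
  have hw' : ∀ k ≤ n, ∀ j ∈ Finset.Icc 1 k, ContDiffOn ℝ (⊤ : ℕ∞) (wTilde φ j) (Ioo a b) :=
    fun k hk j hj => hw j ((Finset.mem_Icc.1 hj).2.trans hk)
  have hp' := hp.top_deriv_of_isOpen hU
  have hq₀' := hq₀.top_deriv_of_isOpen hU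
  have hq : ∀ k, ContDiffOn ℝ (⊤ : ℕ∞) (qTilde p q₀ k) (Ioo a b) :=
    fun k => hq₀.add (contDiffOn_const.mul hp')
  have hr : ∀ k ≤ n, ContDiffOn ℝ (⊤ : ℕ∞) (rTilde p q₀ r₀ φ k) (Ioo a b) := fun k hk =>
    (((hr₀.add (contDiffOn_const.mul hq₀')).add
      (contDiffOn_const.mul (hp'.top_deriv_of_isOpen hU))).add ((hυ k hk).mul hp')).add
      ((contDiffOn_const.mul ((hυ k hk).top_deriv_of_isOpen hU)).mul hp)
  have hchain : ∀ k ≤ n, ∀ y, ContDiffOn ℝ (⊤ : ℕ∞) y (Ioo a b) →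
      ContDiffOn ℝ (⊤ : ℕ∞) (darbouxChain φ k y) (Ioo a b) :=
    fun k hk y hy => contDiffOn_darbouxChain hU (hw' k hk) hy
  have hWchain : ∀ k, k + 1 ≤ n →
      (∀ j ∈ Finset.Icc 1 k, ∀ z ∈ Ioo a b, darbouxChain φ k (φ j) z = 0) →
      ∀ z ∈ Ioo a b,
        wronskian φ (k + 1) z = wronskian φ k z * darbouxChain φ k (φ (k + 1)) z :=
    fun k hk hker z hz =>
      wronskian_succ_eq_mul_darbouxChain hU (hφ' _ hk) (hw' k (by omega)) hker hz
  have hlog : ∀ k, k + 1 ≤ n →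
      (∀ j ∈ Finset.Icc 1 k, ∀ z ∈ Ioo a b, darbouxChain φ k (φ j) z = 0) →
      ∀ z ∈ Ioo a b, wTilde φ (k + 1) z * darbouxChain φ k (φ (k + 1)) z
        = deriv (darbouxChain φ k (φ (k + 1))) z := by
    intro k hk hker z hz
    have hψ := hchain k (by omega) _ (hφ (k + 1) (by simp [hk]))
    have hd : deriv (wronskian φ (k + 1)) z = _ :=
      (deriv_eq_of_eqOn_isOpen (hWchain k hk hker) hU hz).trans
      (((contDiffOn_wronskian hU (hφ' k (by omega))).top_hasDerivAt_of_isOpen hU hz).mul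
        (hψ.top_hasDerivAt_of_isOpen hU hz)).deriv
    have h0 := hW' k (by omega) z hz
    have h1 := hW' (k + 1) hk z hz
    rw [hWchain k hk hker z hz] at h1
    have h2 := right_ne_zero_of_mul h1
    simp only [wTilde, upsGauge, Nat.add_sub_cancel, hd, hWchain k hk hker z hz]
    field_simp
    ring
  have hstep : ∀ k, k + 1 ≤ n →
      (∀ j ∈ Finset.Icc 1 k, ∀ z ∈ Ioo a b, darbouxChain φ k (φ j) z = 0) →
      (∀ z ∈ Ioo a b, secondOrderOp p (qTilde p q₀ k) (rTilde p q₀ r₀ φ k)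
        (darbouxChain φ k (φ (k + 1))) z = lam (k + 1) * darbouxChain φ k (φ (k + 1)) z) →
      ∀ y : ℝ → ℝ, ContDiffOn ℝ (⊤ : ℕ∞) y (Ioo a b) → ∀ z ∈ Ioo a b,
        deriv (secondOrderOp p (qTilde p q₀ k) (rTilde p q₀ r₀ φ k) y) z
            - wTilde φ (k + 1) z
              * secondOrderOp p (qTilde p q₀ k) (rTilde p q₀ r₀ φ k) y z
          = secondOrderOp p (qTilde p q₀ (k + 1)) (rTilde p q₀ r₀ φ (k + 1))
              (fun x => deriv y x - wTilde φ (k + 1) x * y x) z := by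
    intro k hk hker hTψ y hy z hz
    refine darboux_intertwining hU hp (hq k) (hr k (by omega)) (hw (k + 1) hk)
      (hchain k (by omega) _ (hφ (k + 1) (by simp [hk]))) hy ?_ hTψ (hlog k hk hker) ?_ ?_ hz
    · intro x hx
      have h1 := hW' (k + 1) hk x hx
      rw [hWchain k hk hker x hx] at h1
      exact right_ne_zero_of_mul h1
    · intro x _
      simp only [qTilde]
      push_cast
      ring
    · intro x hx
      have dq : deriv (qTilde p q₀ k) x = _ :=
        ((hq₀.top_hasDerivAt_of_isOpen hU hx).add
          ((hp'.top_hasDerivAt_of_isOpen hU hx).const_mul (k : ℝ))).deriv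
      have dw : deriv (wTilde φ (k + 1)) x = _ :=
        (((hυ (k + 1) hk).top_hasDerivAt_of_isOpen hU hx).sub
          ((hυ k (by omega)).top_hasDerivAt_of_isOpen hU hx)).deriv
      simp only [rTilde, dq, dw]
      simp only [wTilde, Nat.add_sub_cancel]
      push_cast
      ring
  have hinv : ∀ k ≤ n,
      (∀ j ∈ Finset.Icc 1 k, ∀ z ∈ Ioo a b, darbouxChain φ k (φ j) z = 0) ∧
      ∀ j ∈ Finset.Icc 1 n, ∀ z ∈ Ioo a b,
        secondOrderOp p (qTilde p q₀ k) (rTilde p q₀ r₀ φ k) (darbouxChain φ k (φ j)) z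
          = lam j * darbouxChain φ k (φ j) z := by
    intro k
    induction k with
    | zero =>
      refine fun _ => ⟨by simp, fun j hj z hz => ?_⟩
      simpa [secondOrderOp, qTilde, rTilde, upsGauge_zero, darbouxChain] using heig j hj z hz
    | succ k ih =>
      intro hk
      obtain ⟨hker, heigk⟩ := ih (by omega)
      refine ⟨fun j hj z hz => ?_, fun j hj z hz => ?_⟩
      · simp only [darbouxChain]
        rcases (Finset.mem_Icc.1 hj).2.eq_or_lt with rfl | hlt
        · rw [hlog k hk hker z hz, sub_self]
        · have hj' : j ∈ Finset.Icc 1 k :=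
            Finset.mem_Icc.2 ⟨(Finset.mem_Icc.1 hj).1, Nat.lt_succ_iff.1 hlt⟩
          have hd := deriv_eq_of_eqOn_isOpen (g := fun _ => 0) (hker j hj') hU hz
          simp [hd, hker j hj' z hz]
      · have hy := hchain k (by omega) _ (hφ j hj)
        have h := hstep k hk hker (heigk (k + 1) (by simp [hk])) _ hy z hz
        have hd : deriv (secondOrderOp p (qTilde p q₀ k) (rTilde p q₀ r₀ φ k)
            (darbouxChain φ k (φ j))) z = _ :=
          (deriv_eq_of_eqOn_isOpen (heigk j hj) hU hz).trans
            ((hy.top_hasDerivAt_of_isOpen hU hz).const_mul (lam j)).deriv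
        rw [hd, heigk j hj z hz] at h
        simp only [darbouxChain]
        rw [← h]
        ring
  intro k hk
  obtain ⟨k, rfl⟩ := Nat.exists_eq_add_of_le' (Finset.mem_Icc.1 hk).1
  have hkn : k + 1 ≤ n := (Finset.mem_Icc.1 hk).2
  obtain ⟨hker, heigk⟩ := hinv k (by omega)
  exact hstep k hkn hker (heigk (k + 1) hk)
end

section
/- Let I ⊆ ℝ be an open interval, q₀, r₀ : I → ℝ smooth, p, φ, μ : I → ℝ smooth and nonvanishing, and λ ∈ ℝ. Suppose p·φ'' + q₀·φ' + r₀·φ = λ·φ on I and μ'/μ = -q₀/p on I. Let ρ, g : I → ℝ be differentiable with ρ' = φ²/(p·μ) and g' = μ·ρ/φ² on I, and set φ⁽¹⁾ = φ·g. Then φ⁽¹⁾ is smooth and satisfies p·(φ⁽¹⁾)'' + q₀·(φ⁽¹⁾)' + r₀·φ⁽¹⁾ = λ·φ⁽¹⁾ + φ on I; that is, φ⁽¹⁾ is a particular solution of the inhomogeneous equation (T₀ - λ)y = φ. -/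
open Set

/-- A function whose derivative on an open set is smooth there is itself smooth there. -/
theorem contDiffOn_infty_of_hasDerivAt {f f' : ℝ → ℝ} {s : Set ℝ} (hs : IsOpen s)
    (hf : ∀ z ∈ s, HasDerivAt f (f' z) z) (hf' : ContDiffOn ℝ (⊤ : ℕ∞) f' s) :
    ContDiffOn ℝ (⊤ : ℕ∞) f s :=
  (contDiffOn_infty_iff_deriv_of_isOpen hs).2
    ⟨fun z hz => (hf z hz).differentiableAt.differentiableWithinAt,
      hf'.congr fun z hz => (hf z hz).deriv⟩

/-- the function `φ⁽¹⁾ = φ·g`, where `g' = μρ/φ²` and `ρ' = φ²/(pμ)`,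
is a smooth particular solution of the inhomogeneous equation `(T₀ - λ)y = φ`. -/
theorem statement6 (a b : ℝ) (hab : a < b)
    (q₀ r₀ p φ μ ρ g : ℝ → ℝ) (lam : ℝ)
    (hq₀ : ContDiffOn ℝ (⊤ : ℕ∞) q₀ (Ioo a b)) (hr₀ : ContDiffOn ℝ (⊤ : ℕ∞) r₀ (Ioo a b))
    (hp : ContDiffOn ℝ (⊤ : ℕ∞) p (Ioo a b)) (hp0 : ∀ z ∈ Ioo a b, p z ≠ 0)
    (hφ : ContDiffOn ℝ (⊤ : ℕ∞) φ (Ioo a b)) (hφ0 : ∀ z ∈ Ioo a b, φ z ≠ 0)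
    (hμ : ContDiffOn ℝ (⊤ : ℕ∞) μ (Ioo a b)) (hμ0 : ∀ z ∈ Ioo a b, μ z ≠ 0)
    (heig : ∀ z ∈ Ioo a b,
      p z * deriv (deriv φ) z + q₀ z * deriv φ z + r₀ z * φ z = lam * φ z)
    (hμeq : ∀ z ∈ Ioo a b, deriv μ z / μ z = -q₀ z / p z)
    (hρ : ∀ z ∈ Ioo a b, HasDerivAt ρ ((φ z) ^ 2 / (p z * μ z)) z)
    (hg : ∀ z ∈ Ioo a b, HasDerivAt g (μ z * ρ z / (φ z) ^ 2) z) :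
    ContDiffOn ℝ (⊤ : ℕ∞) (fun x => φ x * g x) (Ioo a b) ∧
    ∀ z ∈ Ioo a b,
      p z * deriv (deriv (fun x => φ x * g x)) z
        + q₀ z * deriv (fun x => φ x * g x) z
        + r₀ z * (φ z * g z)
      = lam * (φ z * g z) + φ z := by
  have hρs : ContDiffOn ℝ (⊤ : ℕ∞) ρ (Ioo a b) :=
    contDiffOn_infty_of_hasDerivAt isOpen_Ioo hρ
      ((hφ.pow 2).div (hp.mul hμ) fun z hz => mul_ne_zero (hp0 z hz) (hμ0 z hz))
  have hgs : ContDiffOn ℝ (⊤ : ℕ∞) g (Ioo a b) :=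
    contDiffOn_infty_of_hasDerivAt isOpen_Ioo hg
      ((hμ.mul hρs).div (hφ.pow 2) fun z hz => pow_ne_zero 2 (hφ0 z hz))
  refine ⟨hφ.mul hgs, fun z hz => ?_⟩
  have hasDerivAt_of_smooth : ∀ {f : ℝ → ℝ}, ContDiffOn ℝ (⊤ : ℕ∞) f (Ioo a b) →
      ∀ x ∈ Ioo a b, HasDerivAt f (deriv f x) x := fun hf x hx =>
    ((hf.differentiableOn (by simp)).differentiableAt (isOpen_Ioo.mem_nhds hx)).hasDerivAt
  have hφ' : ContDiffOn ℝ (⊤ : ℕ∞) (deriv φ) (Ioo a b) :=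
    ((contDiffOn_infty_iff_deriv_of_isOpen isOpen_Ioo).1 hφ).2
  have first_deriv : ∀ x ∈ Ioo a b,
      deriv (fun x => φ x * g x) x = deriv φ x * g x + μ x * ρ x / φ x := fun x hx => by
    have := hφ0 x hx
    rw [((hasDerivAt_of_smooth hφ x hx).fun_mul (hg x hx)).deriv]
    field_simp
  have hφz := hφ0 z hz
  have hpz := hp0 z hz
  have hμz := hμ0 z hz
  have second_deriv : deriv (deriv (fun x => φ x * g x)) z
      = deriv (deriv φ) z * g z + deriv μ z * ρ z / φ z + φ z / p z := by
    have hev : deriv (fun x => φ x * g x) =ᶠ[nhds z]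
        fun x => deriv φ x * g x + μ x * ρ x / φ x :=
      Filter.eventually_of_mem (isOpen_Ioo.mem_nhds hz) first_deriv
    rw [hev.deriv_eq, (((hasDerivAt_of_smooth hφ' z hz).fun_mul (hg z hz)).fun_add
      (((hasDerivAt_of_smooth hμ z hz).fun_mul (hρ z hz)).fun_div
        (hasDerivAt_of_smooth hφ z hz) hφz)).deriv]
    field_simp
    ring
  have hμ' : deriv μ z * p z = -q₀ z * μ z := (div_eq_div_iff hμz hpz).1 (hμeq z hz)
  rw [second_deriv, first_deriv z hz]
  field_simp
  linear_combination g z * φ z * heig z hz + ρ z * hμ'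
end

section
/- Let I ⊆ (-1,1) be an open interval, α ∈ ℝ, λ ∈ ℝ, and let τ, π : ℝ → ℝ be polynomials that do not vanish on I. Define, for smooth y : I → ℝ, the operators T^{(α)}_τ y = (1-z²)·(y'' - 2(τ'/τ)·y' + (τ''/τ)·y) - (2α+1)·z·y' + (2α-1)·z·(τ'/τ)·y, A y = τ⁻¹·(π·y' - π'·y), and B y = (1-z²)·π⁻¹·(τ·y' - τ'·y) - (2α+1)·z·(τ/π)·y. If T^{(α)}_τ π = λ·π on I, then for every smooth y : I → ℝ one has B(A y) = T^{(α)}_τ y - λ·y and A(B y) = T^{(α+1)}_π y - (λ + 2α + 1)·y on I. -/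
open Set Polynomial

/-- The exceptional Gegenbauer operator `T^{(α)}_τ` (with `τ` a polynomial),
acting on smooth functions. -/
noncomputable def xGegenOp (α : ℝ) (τ : Polynomial ℝ) (y : ℝ → ℝ) (z : ℝ) : ℝ :=
  (1 - z ^ 2) * (deriv (deriv y) z
      - 2 * ((derivative τ).eval z / τ.eval z) * deriv y z
      + ((derivative (derivative τ)).eval z / τ.eval z) * y z)
    - (2 * α + 1) * z * deriv y z
    + (2 * α - 1) * z * ((derivative τ).eval z / τ.eval z) * y z

/-- The first-order operator `A_{τπ} y = τ⁻¹(π y' - π' y)`. -/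
noncomputable def aOp (τ π : Polynomial ℝ) (y : ℝ → ℝ) (z : ℝ) : ℝ :=
  (π.eval z * deriv y z - (derivative π).eval z * y z) / τ.eval z

/-- The first-order operator `B^{(α)}_{πτ} y = (1-z²)π⁻¹(τ y' - τ' y) - (2α+1)z(τ/π)y`. -/
noncomputable def bOp (α : ℝ) (τ π : Polynomial ℝ) (y : ℝ → ℝ) (z : ℝ) : ℝ :=
  (1 - z ^ 2) * (τ.eval z * deriv y z - (derivative τ).eval z * y z) / π.eval z
    - (2 * α + 1) * z * (τ.eval z / π.eval z) * y z

theorem hasDerivAt_aOp {τ π : Polynomial ℝ} {y : ℝ → ℝ} {z : ℝ} (hτ : τ.eval z ≠ 0)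
    (hy : DifferentiableAt ℝ y z) (hy' : DifferentiableAt ℝ (deriv y) z) :
    HasDerivAt (aOp τ π y)
      (((π.eval z * deriv (deriv y) z - (derivative (derivative π)).eval z * y z) * τ.eval z
        - (π.eval z * deriv y z - (derivative π).eval z * y z) * (derivative τ).eval z)
          / τ.eval z ^ 2) z := by
  have h := (((π.hasDerivAt z).mul hy'.hasDerivAt).sub
    (((derivative π).hasDerivAt z).mul hy.hasDerivAt)).div (τ.hasDerivAt z) hτ
  refine h.congr_deriv ?_
  simp only [Pi.mul_apply, Pi.sub_apply]
  ring

theorem hasDerivAt_bOp (α : ℝ) {τ π : Polynomial ℝ} {y : ℝ → ℝ} {z : ℝ} (hπ : π.eval z ≠ 0)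
    (hy : DifferentiableAt ℝ y z) (hy' : DifferentiableAt ℝ (deriv y) z) :
    HasDerivAt (bOp α τ π y)
      ((((1 - z ^ 2) * (τ.eval z * deriv (deriv y) z - (derivative (derivative τ)).eval z * y z)
          - 2 * z * (τ.eval z * deriv y z - (derivative τ).eval z * y z)
          - (2 * α + 1) * (τ.eval z * y z + z * (derivative τ).eval z * y z
            + z * τ.eval z * deriv y z)) * π.eval z
        - ((1 - z ^ 2) * (τ.eval z * deriv y z - (derivative τ).eval z * y z)
          - (2 * α + 1) * z * τ.eval z * y z) * (derivative π).eval z)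
          / π.eval z ^ 2) z := by
  have h := (((((hasDerivAt_id z).pow 2).const_sub 1).mul
      (((τ.hasDerivAt z).mul hy'.hasDerivAt).sub
        (((derivative τ).hasDerivAt z).mul hy.hasDerivAt))).div (π.hasDerivAt z) hπ).sub
    ((((hasDerivAt_id z).const_mul (2 * α + 1)).mul
      ((τ.hasDerivAt z).div (π.hasDerivAt z) hπ)).mul hy.hasDerivAt)
  refine h.congr_deriv ?_
  simp only [Pi.mul_apply, Pi.sub_apply, Pi.div_apply, Pi.pow_apply, id]
  field_simp
  ring

/-- if `T^{(α)}_τ π = λπ` on `I`, then `BA = T^{(α)}_τ - λ` and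
`AB = T^{(α+1)}_π - (λ + 2α + 1)` on `I`. -/
theorem statement8 (a b : ℝ) (hab : a < b) (ha : -1 ≤ a) (hb : b ≤ 1)
    (α lam : ℝ) (τ π : Polynomial ℝ)
    (hτ0 : ∀ z ∈ Ioo a b, τ.eval z ≠ 0) (hπ0 : ∀ z ∈ Ioo a b, π.eval z ≠ 0)
    (heig : ∀ z ∈ Ioo a b, xGegenOp α τ (fun x => π.eval x) z = lam * π.eval z) :
    ∀ y : ℝ → ℝ, ContDiffOn ℝ (⊤ : ℕ∞) y (Ioo a b) → ∀ z ∈ Ioo a b,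
      bOp α τ π (aOp τ π y) z = xGegenOp α τ y z - lam * y z ∧
      aOp τ π (bOp α τ π y) z = xGegenOp (α + 1) π y z - (lam + 2 * α + 1) * y z := by
  intro y hy z hz
  have hcd : ContDiffAt ℝ (⊤ : ℕ∞) y z := hy.contDiffAt (Ioo_mem_nhds hz.1 hz.2)
  have hy0 : DifferentiableAt ℝ y z := hcd.differentiableAt (by simp)
  have hy1 : DifferentiableAt ℝ (deriv y) z :=
    (hcd.derivWithin (m := (⊤ : ℕ∞)) le_rfl).differentiableAt (by simp)
  have hτ := hτ0 z hz
  have hπ := hπ0 z hz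
  have hderiv : deriv (fun x => π.eval x) = fun x => (derivative π).eval x :=
    funext fun _ => π.deriv
  have he := heig z hz
  simp only [xGegenOp, hderiv, Polynomial.deriv] at he
  have hlam : lam = ((1 - z ^ 2) * ((derivative (derivative π)).eval z
      - 2 * ((derivative τ).eval z / τ.eval z) * (derivative π).eval z
      + ((derivative (derivative τ)).eval z / τ.eval z) * π.eval z)
    - (2 * α + 1) * z * (derivative π).eval z
    + (2 * α - 1) * z * ((derivative τ).eval z / τ.eval z) * π.eval z) / π.eval z := by
    rw [he, mul_div_cancel_right₀ _ hπ]
  constructor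
  · rw [bOp, (hasDerivAt_aOp hτ hy0 hy1).deriv, aOp, xGegenOp, hlam]
    field_simp
    ring
  · rw [aOp, (hasDerivAt_bOp α hπ hy0 hy1).deriv, bOp, xGegenOp, hlam]
    field_simp
    ring
end

section
/- Let I ⊆ (-1,1) be an open interval, α ∈ ℝ, λ ∈ ℝ, and let τ, π : ℝ → ℝ be polynomials that do not vanish on I. Set τ̂(z) = (1-z²)^{-α-1/2}·τ(z) and λ̂ = λ + 2α + 1, and define for smooth y : I → ℝ the operators T^{(α)}_τ y = (1-z²)·(y'' - 2(τ'/τ)·y' + (τ''/τ)·y) - (2α+1)·z·y' + (2α-1)·z·(τ'/τ)·y, T^{(α+1)}_π y = (1-z²)·(y'' - 2(π'/π)·y' + (π''/π)·y) - (2α+3)·z·y' + (2α+1)·z·(π'/π)·y, A y = τ⁻¹·(π·y' - π'·y), and B y = (1-z²)·π⁻¹·(τ·y' - τ'·y) - (2α+1)·z·(τ/π)·y. If T^{(α+1)}_π τ̂ = λ̂·τ̂ on I, then for every smooth y : I → ℝ one has B(A y) = T^{(α)}_τ y - λ·y and A(B y) = T^{(α+1)}_π y - λ̂·y on I. In particular,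 the identity π·(T^{(α+1)}_π τ̂) = τ̂·(T^{(α)}_τ π) + (2α+1)·π·τ̂ holds on I. -/
open Set Polynomial

/-- The hatted function `τ̂(z) = (1-z²)^{-α-1/2} τ(z)`. -/
noncomputable def tauHat (α : ℝ) (τ : Polynomial ℝ) (z : ℝ) : ℝ :=
  (1 - z ^ 2) ^ (-α - 1/2 : ℝ) * τ.eval z

/-- `ρ(z) = (1-z²)^s` satisfies `ρ' = -2 s z ρ / (1-z²)` on `(-1, 1)`. -/
theorem hasDerivAt_one_sub_sq_rpow {z : ℝ} (s : ℝ) (hz : 0 < 1 - z ^ 2) :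
    HasDerivAt (fun x : ℝ => (1 - x ^ 2) ^ s) (-2 * s * z / (1 - z ^ 2) * (1 - z ^ 2) ^ s) z := by
  have h : HasDerivAt (fun x : ℝ => 1 - x ^ 2) (-(2 * z)) z := by
    simpa using (hasDerivAt_pow 2 z).const_sub 1
  convert h.rpow_const (p := s) (Or.inl hz.ne') using 1
  rw [Real.rpow_sub_one hz.ne']
  field_simp

theorem hasDerivAt_tauHat {z : ℝ} (α : ℝ) (τ : Polynomial ℝ) (hz : 0 < 1 - z ^ 2) :
    HasDerivAt (tauHat α τ) ((1 - z ^ 2) ^ (-α - 1/2 : ℝ) *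
      ((derivative τ).eval z + (2 * α + 1) * z / (1 - z ^ 2) * τ.eval z)) z := by
  refine HasDerivAt.congr_deriv ((hasDerivAt_one_sub_sq_rpow (-α - 1/2) hz).mul (τ.hasDerivAt z)) ?_
  ring

theorem deriv_deriv_tauHat {z : ℝ} (α : ℝ) (τ : Polynomial ℝ) (hz : 0 < 1 - z ^ 2) :
    deriv (deriv (tauHat α τ)) z = (1 - z ^ 2) ^ (-α - 1/2 : ℝ) *
      ((derivative (derivative τ)).eval z
        + 2 * ((2 * α + 1) * z / (1 - z ^ 2)) * (derivative τ).eval z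
        + (2 * α + 1) * (1 + (2 * α + 2) * z ^ 2) / (1 - z ^ 2) ^ 2 * τ.eval z) := by
  have hpos : ∀ᶠ x : ℝ in nhds z, 0 < 1 - x ^ 2 :=
    ContinuousAt.eventually_lt (by fun_prop) (by fun_prop) hz
  have heq : deriv (tauHat α τ) =ᶠ[nhds z] fun x => (1 - x ^ 2) ^ (-α - 1/2 : ℝ) *
      ((derivative τ).eval x + (2 * α + 1) * x / (1 - x ^ 2) * τ.eval x) :=
    hpos.mono fun x hx => (hasDerivAt_tauHat α τ hx).deriv
  rw [heq.deriv_eq]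
  have hw : HasDerivAt (fun x : ℝ => 1 - x ^ 2) (-(2 * z)) z := by
    simpa using (hasDerivAt_pow 2 z).const_sub 1
  have hlin : HasDerivAt (fun x : ℝ => (2 * α + 1) * x) (2 * α + 1) z := by
    simpa using (hasDerivAt_id z).const_mul (2 * α + 1)
  refine HasDerivAt.deriv ?_
  refine HasDerivAt.congr_deriv ((hasDerivAt_one_sub_sq_rpow (-α - 1/2) hz).mul
    (((derivative τ).hasDerivAt z).add ((hlin.div hw hz.ne').mul (τ.hasDerivAt z)))) ?_
  simp only [Pi.div_apply]
  field_simp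
  ring

/-- The intertwining identity `π T^{(α+1)}_π τ̂ = τ̂ T^{(α)}_τ π + (2α+1) π τ̂`. -/
theorem eval_mul_xGegenOp_tauHat {z : ℝ} (α : ℝ) {τ π : Polynomial ℝ} (hz : 0 < 1 - z ^ 2)
    (hτ : τ.eval z ≠ 0) (hπ : π.eval z ≠ 0) :
    π.eval z * xGegenOp (α + 1) π (tauHat α τ) z
      = tauHat α τ z * xGegenOp α τ (fun x => π.eval x) z
        + (2 * α + 1) * π.eval z * tauHat α τ z := by
  have hπ' : deriv (fun x => π.eval x) = fun x => (derivative π).eval x :=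
    funext fun _ => π.deriv
  unfold xGegenOp
  rw [deriv_deriv_tauHat α τ hz, (hasDerivAt_tauHat α τ hz).deriv, hπ', Polynomial.deriv, tauHat]
  field_simp
  ring

theorem deriv_aOp {z : ℝ} {τ π : Polynomial ℝ} {y : ℝ → ℝ} (hτ : τ.eval z ≠ 0)
    (hy : DifferentiableAt ℝ y z) (hy' : DifferentiableAt ℝ (deriv y) z) :
    deriv (aOp τ π y) z =
      ((π.eval z * deriv (deriv y) z - (derivative (derivative π)).eval z * y z) * τ.eval z
        - (π.eval z * deriv y z - (derivative π).eval z * y z) * (derivative τ).eval z)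
      / τ.eval z ^ 2 := by
  refine HasDerivAt.deriv ?_
  refine HasDerivAt.congr_deriv ((((π.hasDerivAt z).mul hy'.hasDerivAt).sub
    (((derivative π).hasDerivAt z).mul hy.hasDerivAt)).div (τ.hasDerivAt z) hτ) ?_
  simp only [Pi.sub_apply, Pi.mul_apply]
  ring

theorem deriv_bOp {z : ℝ} (α : ℝ) {τ π : Polynomial ℝ} {y : ℝ → ℝ} (hπ : π.eval z ≠ 0)
    (hy : DifferentiableAt ℝ y z) (hy' : DifferentiableAt ℝ (deriv y) z) :
    deriv (bOp α τ π y) z =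
      ((1 - z ^ 2) * (τ.eval z * deriv (deriv y) z - (derivative (derivative τ)).eval z * y z)
        - 2 * z * (τ.eval z * deriv y z - (derivative τ).eval z * y z)
        - (2 * α + 1) * (τ.eval z * y z + z * (derivative τ).eval z * y z
          + z * τ.eval z * deriv y z)) / π.eval z
      - ((1 - z ^ 2) * (τ.eval z * deriv y z - (derivative τ).eval z * y z)
        - (2 * α + 1) * z * τ.eval z * y z) * (derivative π).eval z / π.eval z ^ 2 := by
  have hw : HasDerivAt (fun x : ℝ => 1 - x ^ 2) (-(2 * z)) z := by
    simpa using (hasDerivAt_pow 2 z).const_sub 1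
  have hlin : HasDerivAt (fun x : ℝ => (2 * α + 1) * x) (2 * α + 1) z := by
    simpa using (hasDerivAt_id z).const_mul (2 * α + 1)
  refine HasDerivAt.deriv ?_
  refine HasDerivAt.congr_deriv (((hw.mul (((τ.hasDerivAt z).mul hy'.hasDerivAt).sub
    (((derivative τ).hasDerivAt z).mul hy.hasDerivAt))).div (π.hasDerivAt z) hπ).sub
    ((hlin.mul ((τ.hasDerivAt z).div (π.hasDerivAt z) hπ)).mul hy.hasDerivAt)) ?_
  simp only [Pi.sub_apply, Pi.mul_apply, Pi.div_apply]
  field_simp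
  ring

/-- the dual (state-adding) factorization. If
`T^{(α+1)}_π τ̂ = λ̂ τ̂` on `I`, with `λ̂ = λ + 2α + 1`, then `BA = T^{(α)}_τ - λ`
and `AB = T^{(α+1)}_π - λ̂` on `I`; in particular
`π (T^{(α+1)}_π τ̂) = τ̂ (T^{(α)}_τ π) + (2α+1) π τ̂` on `I`. -/
theorem statement9 (a b : ℝ) (hab : a < b) (ha : -1 ≤ a) (hb : b ≤ 1)
    (α lam : ℝ) (τ π : Polynomial ℝ)
    (hτ0 : ∀ z ∈ Ioo a b, τ.eval z ≠ 0) (hπ0 : ∀ z ∈ Ioo a b, π.eval z ≠ 0)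
    (heig : ∀ z ∈ Ioo a b,
      xGegenOp (α + 1) π (tauHat α τ) z = (lam + 2 * α + 1) * tauHat α τ z) :
    (∀ y : ℝ → ℝ, ContDiffOn ℝ (⊤ : ℕ∞) y (Ioo a b) → ∀ z ∈ Ioo a b,
      bOp α τ π (aOp τ π y) z = xGegenOp α τ y z - lam * y z ∧
      aOp τ π (bOp α τ π y) z
        = xGegenOp (α + 1) π y z - (lam + 2 * α + 1) * y z) ∧
    (∀ z ∈ Ioo a b,
      π.eval z * xGegenOp (α + 1) π (tauHat α τ) z
        = tauHat α τ z * xGegenOp α τ (fun x => π.eval x) z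
          + (2 * α + 1) * π.eval z * tauHat α τ z) := by
  have hpos : ∀ z ∈ Ioo a b, 0 < 1 - z ^ 2 := fun z hz => by
    nlinarith [hz.1, hz.2]
  have hid : ∀ z ∈ Ioo a b, π.eval z * xGegenOp (α + 1) π (tauHat α τ) z
      = tauHat α τ z * xGegenOp α τ (fun x => π.eval x) z
        + (2 * α + 1) * π.eval z * tauHat α τ z := fun z hz =>
    eval_mul_xGegenOp_tauHat α (hpos z hz) (hτ0 z hz) (hπ0 z hz)
  refine ⟨fun y hy z hz => ?_, hid⟩
  have hτ := hτ0 z hz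
  have hπ := hπ0 z hz
  have hhat : tauHat α τ z ≠ 0 := mul_ne_zero (Real.rpow_pos_of_pos (hpos z hz) _).ne' hτ
  have hlam : xGegenOp α τ (fun x => π.eval x) z = lam * π.eval z := by
    refine mul_left_cancel₀ hhat ?_
    linear_combination π.eval z * heig z hz - hid z hz
  have hπ' : deriv (fun x => π.eval x) = fun x => (derivative π).eval x :=
    funext fun _ => π.deriv
  have hyz : ContDiffAt ℝ (⊤ : ℕ∞) y z := hy.contDiffAt (isOpen_Ioo.mem_nhds hz)
  have hd : DifferentiableAt ℝ y z := hyz.differentiableAt (by simp)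
  have hd' : DifferentiableAt ℝ (deriv y) z :=
    ((hy.deriv_of_isOpen (m := 1) isOpen_Ioo (WithTop.coe_le_coe.2 le_top)).contDiffAt
      (isOpen_Ioo.mem_nhds hz)).differentiableAt one_ne_zero
  rw [xGegenOp, hπ', Polynomial.deriv] at hlam
  obtain rfl := (eq_div_iff hπ).2 hlam.symm
  constructor
  · rw [bOp, deriv_aOp hτ hd hd', aOp, xGegenOp]
    field_simp
    ring
  · rw [aOp, deriv_bOp α hπ hd hd', bOp, xGegenOp]
    field_simp
    ring
end

section
/- Let α ∈ ℝ, λ ∈ ℝ, and let τ, π ∈ ℝ[X] be nonzero real polynomials with deg τ = m and deg π = n. Suppose the polynomial identity (1 - X²)·(τ·π'' - 2·τ'·π' + τ''·π) - (2α+1)·X·τ·π' + (2α-1)·X·τ'·π = λ·τ·π holds in ℝ[X]. Then λ = -(n - m)·(2α + n - m). -/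
open Polynomial

/-- Multiplying by `X` after differentiating does not raise the degree. -/
lemma natDegree_X_mul_derivative_le {R : Type*} [Semiring R] (p : R[X]) :
    (X * derivative p).natDegree ≤ p.natDegree := by
  refine natDegree_le_iff_coeff_eq_zero.mpr fun k hk => ?_
  cases k with
  | zero => simp
  | succ k => rw [coeff_X_mul, coeff_derivative, coeff_eq_zero_of_natDegree_lt hk, zero_mul]

/-- The Euler operator `p ↦ X p'` multiplies the `k`-th coefficient by `k`. -/
lemma coeff_X_mul_derivative {R : Type*} [Semiring R] (p : R[X]) (k : ℕ) :
    (X * derivative p).coeff k = p.coeff k * k := by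
  cases k with
  | zero => simp
  | succ k => simp [coeff_X_mul, coeff_derivative]

/-- `X² p''` in terms of the Euler operator. -/
lemma X_sq_mul_derivative_derivative {R : Type*} [CommRing R] (p : R[X]) :
    X ^ 2 * derivative (derivative p) =
      X * derivative (X * derivative p) - X * derivative p := by
  simp only [derivative_mul, derivative_X]
  ring

lemma natDegree_X_sq_mul_derivative_derivative_le {R : Type*} [CommRing R] (p : R[X]) :
    (X ^ 2 * derivative (derivative p)).natDegree ≤ p.natDegree := by
  rw [X_sq_mul_derivative_derivative]
  exact natDegree_sub_le_of_le
    ((natDegree_X_mul_derivative_le _).trans (natDegree_X_mul_derivative_le p))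
    (natDegree_X_mul_derivative_le p) |>.trans (max_self _).le

lemma coeff_X_sq_mul_derivative_derivative {R : Type*} [CommRing R] (p : R[X]) (k : ℕ) :
    (X ^ 2 * derivative (derivative p)).coeff k = p.coeff k * (k * (k - 1)) := by
  rw [X_sq_mul_derivative_derivative, coeff_sub]
  simp only [coeff_X_mul_derivative]
  ring

/-- if the cleared eigenvalue identity
`(1-X²)(τπ'' - 2τ'π' + τ''π) - (2α+1)Xτπ' + (2α-1)Xτ'π = λτπ` holds in `ℝ[X]`
with `deg τ = m` and `deg π = n`, then `λ = -(n-m)(2α + n - m)`. -/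
theorem statement10 (α lam : ℝ) (m n : ℕ) (τ π : Polynomial ℝ)
    (hτ : τ ≠ 0) (hπ : π ≠ 0)
    (hm : τ.natDegree = m) (hn : π.natDegree = n)
    (hid : (1 - X ^ 2) *
        (τ * derivative (derivative π) - 2 * derivative τ * derivative π
          + derivative (derivative τ) * π)
      - C (2 * α + 1) * X * (τ * derivative π)
      + C (2 * α - 1) * X * (derivative τ * π)
      = C lam * (τ * π)) :
    lam = -((n : ℝ) - m) * (2 * α + ((n : ℝ) - m)) := by
  subst hm hn
  set A : ℝ[X] := τ * (X ^ 2 * derivative (derivative π))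
      - C 2 * ((X * derivative τ) * (X * derivative π))
      + (X ^ 2 * derivative (derivative τ)) * π with hA
  have hτ₁ := natDegree_X_mul_derivative_le τ
  have hπ₁ := natDegree_X_mul_derivative_le π
  have hτ₂ := natDegree_X_sq_mul_derivative_derivative_le τ
  have hπ₂ := natDegree_X_sq_mul_derivative_derivative_le π
  have hA_deg : A.natDegree ≤ τ.natDegree + π.natDegree := by
    refine natDegree_add_le_of_degree_le (natDegree_sub_le_of_le ?_ ?_ |>.trans (max_self _).le)
      (natDegree_mul_le_of_le hτ₂ le_rfl)
    · exact natDegree_mul_le_of_le le_rfl hπ₂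
    · exact (natDegree_C_mul_le _ _).trans (natDegree_mul_le_of_le hτ₁ hπ₁)
  have hid_sq : A = (A + C (2 * α + 1) * (τ * (X * derivative π))
      - C (2 * α - 1) * ((X * derivative τ) * π) + C lam * (τ * π)) * X ^ 2 := by
    have hC : (C 2 : ℝ[X]) = 2 := rfl
    rw [hA, hC]
    linear_combination X ^ 2 * hid
  have hcoeff := congrArg (fun p => p.coeff (τ.natDegree + π.natDegree + 2)) hid_sq
  simp only [coeff_mul_X_pow] at hcoeff
  rw [coeff_eq_zero_of_natDegree_lt (by lia), hA] at hcoeff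
  simp only [coeff_add, coeff_sub, coeff_C_mul, coeff_mul_add_eq_of_natDegree_le le_rfl hπ₂,
    coeff_mul_add_eq_of_natDegree_le hτ₁ hπ₁, coeff_mul_add_eq_of_natDegree_le hτ₂ le_rfl,
    coeff_mul_add_eq_of_natDegree_le le_rfl hπ₁, coeff_mul_add_eq_of_natDegree_le hτ₁ le_rfl,
    coeff_mul_add_eq_of_natDegree_le (le_refl τ.natDegree) (le_refl π.natDegree),
    coeff_X_mul_derivative, coeff_X_sq_mul_derivative_derivative, coeff_natDegree] at hcoeff
  refine mul_left_cancel₀ (mul_ne_zero (leadingCoeff_ne_zero.mpr hτ)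
    (leadingCoeff_ne_zero.mpr hπ)) ?_
  linear_combination -hcoeff
end

section
/- Let α > -1/2 and let τ ∈ ℝ[X] be a polynomial with no zeros on [-1,1]. Let π_i, π_j ∈ ℝ[X] and λ_i, λ_j ∈ ℝ with λ_i ≠ λ_j, and suppose that for each (π, λ) ∈ {(π_i, λ_i), (π_j, λ_j)} the polynomial identity (1 - X²)·(τ·π'' - 2·τ'·π' + τ''·π) - (2α+1)·X·τ·π' + (2α-1)·X·τ'·π = λ·τ·π holds in ℝ[X]. Then ∫_{-1}^{1} π_i(z)·π_j(z)·(1-z²)^{α-1/2}/τ(z)² dz = 0. -/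
open Polynomial

theorem one_sub_sq_pos_of_mem_Ioo {z : ℝ} (hz : z ∈ Set.Ioo (-1 : ℝ) 1) : 0 < 1 - z ^ 2 := by
  nlinarith [hz.1, hz.2]

/-- The Gegenbauer weight `(1 - z²)ˢ` is integrable on `[-1, 1]` for `s > -1`. -/
theorem intervalIntegrable_one_sub_sq_rpow {s : ℝ} (hs : -1 < s) :
    IntervalIntegrable (fun z : ℝ => (1 - z ^ 2) ^ s) MeasureTheory.volume (-1) 1 := by
  have right : IntervalIntegrable (fun z : ℝ => (1 - z ^ 2) ^ s) MeasureTheory.volume 0 1 := by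
    have h : IntervalIntegrable (fun z : ℝ => (1 - z) ^ s) MeasureTheory.volume 0 1 := by
      simpa using (intervalIntegral.intervalIntegrable_rpow' (a := 1) (b := 0) hs).comp_sub_left 1
    have hc : ContinuousOn (fun z : ℝ => (1 + z) ^ s) (Set.uIcc 0 1) := by
      rw [Set.uIcc_of_le zero_le_one]
      exact ContinuousOn.rpow_const (by fun_prop) fun z hz => Or.inl (by linarith [hz.1])
    refine (h.mul_continuousOn hc).congr fun z hz => ?_
    rw [Set.uIoc_of_le zero_le_one] at hz
    rw [← Real.mul_rpow (by linarith [hz.2]) (by linarith [hz.1])]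
    ring_nf
  have left : IntervalIntegrable (fun z : ℝ => (1 - z ^ 2) ^ s) MeasureTheory.volume (-1) 0 := by
    simpa using (right.comp_sub_left 0).symm
  exact left.trans right

/-- The integrated form of the Sturm–Liouville identity: the weighted Wronskian of two
eigenpolynomials is a primitive of a multiple of their weighted product. -/
theorem hasDerivAt_weighted_wronskian {α lami lamj z : ℝ} {τ p q : Polynomial ℝ}
    (hz : 0 < 1 - z ^ 2) (hτ : τ.eval z ≠ 0)
    (hp : (1 - X ^ 2) *
        (τ * derivative (derivative p) - 2 * derivative τ * derivative p
          + derivative (derivative τ) * p)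
      - C (2 * α + 1) * X * (τ * derivative p)
      + C (2 * α - 1) * X * (derivative τ * p)
      = C lami * (τ * p))
    (hq : (1 - X ^ 2) *
        (τ * derivative (derivative q) - 2 * derivative τ * derivative q
          + derivative (derivative τ) * q)
      - C (2 * α + 1) * X * (τ * derivative q)
      + C (2 * α - 1) * X * (derivative τ * q)
      = C lamj * (τ * q)) :
    HasDerivAt
      (fun x : ℝ => (1 - x ^ 2) ^ (α + 1/2 : ℝ) *
        ((derivative p).eval x * q.eval x - p.eval x * (derivative q).eval x) / (τ.eval x) ^ 2)
      ((lami - lamj) *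
        (p.eval z * q.eval z * (1 - z ^ 2) ^ (α - 1/2 : ℝ) / (τ.eval z) ^ 2)) z := by
  have hw : HasDerivAt (fun x : ℝ => (1 - x ^ 2) ^ (α + 1/2 : ℝ))
      (-(2 * z) * (α + 1/2) * (1 - z ^ 2) ^ (α + 1/2 - 1 : ℝ)) z := by
    refine HasDerivAt.rpow_const ?_ (Or.inl hz.ne')
    simpa using (hasDerivAt_pow 2 z).const_sub 1
  have hW := (((derivative p).hasDerivAt z).mul (q.hasDerivAt z)).sub
    ((p.hasDerivAt z).mul ((derivative q).hasDerivAt z))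
  refine ((hw.mul hW).div ((τ.hasDerivAt z).pow 2) (pow_ne_zero 2 hτ)).congr_deriv ?_
  have hsplit : (1 - z ^ 2) ^ (α + 1/2 : ℝ) = (1 - z ^ 2) ^ (α - 1/2 : ℝ) * (1 - z ^ 2) := by
    rw [← Real.rpow_add_one hz.ne']
    ring_nf
  have hp' := congrArg (eval z) hp
  have hq' := congrArg (eval z) hq
  simp only [eval_add, eval_sub, eval_mul, eval_pow, eval_X, eval_C, eval_one, eval_ofNat]
    at hp' hq'
  simp only [Pi.mul_apply, Pi.sub_apply, Pi.pow_apply]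
  rw [hsplit, show α + 1/2 - 1 = α - 1/2 by ring]
  field_simp
  linear_combination τ.eval z * (q.eval z * hp' - p.eval z * hq')

/-- eigenpolynomials of the exceptional Gegenbauer operator with
distinct eigenvalues are orthogonal with respect to the weight
`(1-z²)^{α-1/2}/τ(z)²` on `[-1,1]`. -/
theorem statement11 (α : ℝ) (hα : -1/2 < α) (τ πi πj : Polynomial ℝ)
    (lami lamj : ℝ) (hne : lami ≠ lamj)
    (hτ0 : ∀ z ∈ Set.Icc (-1 : ℝ) 1, τ.eval z ≠ 0)
    (hi : (1 - X ^ 2) *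
        (τ * derivative (derivative πi) - 2 * derivative τ * derivative πi
          + derivative (derivative τ) * πi)
      - C (2 * α + 1) * X * (τ * derivative πi)
      + C (2 * α - 1) * X * (derivative τ * πi)
      = C lami * (τ * πi))
    (hj : (1 - X ^ 2) *
        (τ * derivative (derivative πj) - 2 * derivative τ * derivative πj
          + derivative (derivative τ) * πj)
      - C (2 * α + 1) * X * (τ * derivative πj)
      + C (2 * α - 1) * X * (derivative τ * πj)
      = C lamj * (τ * πj)) :
    ∫ z in (-1 : ℝ)..1,
      πi.eval z * πj.eval z * (1 - z ^ 2) ^ (α - 1/2 : ℝ) / (τ.eval z) ^ 2 = 0 := by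
  have hIcc : Set.uIcc (-1 : ℝ) 1 = Set.Icc (-1) 1 := Set.uIcc_of_le (by norm_num)
  have hint : IntervalIntegrable (fun z : ℝ =>
      πi.eval z * πj.eval z * (1 - z ^ 2) ^ (α - 1/2 : ℝ) / (τ.eval z) ^ 2)
      MeasureTheory.volume (-1) 1 := by
    have hc : ContinuousOn (fun z : ℝ => πi.eval z * πj.eval z / (τ.eval z) ^ 2)
        (Set.uIcc (-1) 1) := by
      rw [hIcc]
      exact ContinuousOn.div (by fun_prop) (by fun_prop) fun z hz => pow_ne_zero 2 (hτ0 z hz)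
    refine ((intervalIntegrable_one_sub_sq_rpow (s := α - 1/2) (by linarith)).mul_continuousOn
      hc).congr fun z _ => ?_
    ring
  have hcont : ContinuousOn (fun x : ℝ => (1 - x ^ 2) ^ (α + 1/2 : ℝ) *
      ((derivative πi).eval x * πj.eval x - πi.eval x * (derivative πj).eval x) / (τ.eval x) ^ 2)
      (Set.Icc (-1) 1) := by
    refine ContinuousOn.div (ContinuousOn.mul ?_ (by fun_prop)) (by fun_prop)
      fun z hz => pow_ne_zero 2 (hτ0 z hz)
    exact ContinuousOn.rpow_const (by fun_prop) fun z _ => Or.inr (by linarith)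
  have hftc := intervalIntegral.integral_eq_sub_of_hasDerivAt_of_le (by norm_num) hcont
    (fun z hz => hasDerivAt_weighted_wronskian (one_sub_sq_pos_of_mem_Ioo hz)
      (hτ0 z (Set.Ioo_subset_Icc_self hz)) hi hj)
    (hint.const_mul (lami - lamj))
  rw [intervalIntegral.integral_const_mul] at hftc
  have hα' : α + 2⁻¹ ≠ 0 := by linarith
  simpa [Real.zero_rpow hα', sub_eq_zero, hne] using hftc
end

section
/- Let α > -1/2, let τ ∈ ℝ[X] have no zeros on [-1,1], and let π_i, π_m ∈ ℝ[X] satisfy the cleared eigenvalue equations (1 - X²)·(τ·π'' - 2·τ'·π' + τ''·π) - (2α+1)·X·τ·π' + (2α-1)·X·τ'·π = λ·τ·π in ℝ[X] with (π, λ) = (π_i, λ_i) and (π, λ) = (π_m, λ_m) respectively, where λ_i ≠ λ_m. Define W^{(α)}_τ(z) = (1-z²)^{α-1/2}/τ(z)², ρ_{ab}(z) = ∫_{-1}^{z} π_a(u)·π_b(u)·W^{(α)}_τ(u) du for (a,b) ∈ {(m,m),(i,m)}, τ_m(z) = τ(z)·(1 + t·ρ_{mm}(z)), and π_{m;i}(z)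 = (1 + t·ρ_{mm}(z))·π_i(z) - t·ρ_{im}(z)·π_m(z), for a fixed t ∈ ℝ. Then for all z ∈ (-1,1): (1-z²)·(τ_m·π_{m;i}'' - 2·τ_m'·π_{m;i}' + τ_m''·π_{m;i}) - (2α+1)·z·τ_m·π_{m;i}' + (2α-1)·z·τ_m'·π_{m;i} = λ_i·τ_m·π_{m;i}. -/
open Polynomial

/-- The weight `W^{(α)}_τ(z) = (1-z²)^{α-1/2}/τ(z)²`. -/
noncomputable def gegenWeight (α : ℝ) (τ : Polynomial ℝ) (z : ℝ) : ℝ :=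
  (1 - z ^ 2) ^ (α - 1/2 : ℝ) / (τ.eval z) ^ 2

/-- `ρ_{ab}(z) = ∫_{-1}^z π_a π_b W^{(α)}_τ`. -/
noncomputable def rhoInt (α : ℝ) (τ pa pb : Polynomial ℝ) (z : ℝ) : ℝ :=
  ∫ u in (-1 : ℝ)..z, pa.eval u * pb.eval u * gegenWeight α τ u

/-- The transformed τ-function `τ_m = τ(1 + tρ_{mm})`. -/
noncomputable def tauCDT (α : ℝ) (τ πm : Polynomial ℝ) (t : ℝ) (z : ℝ) : ℝ :=
  τ.eval z * (1 + t * rhoInt α τ πm πm z)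

/-- The transformed eigenfunction `π_{m;i} = (1 + tρ_{mm})π_i - tρ_{im}π_m`. -/
noncomputable def piCDT (α : ℝ) (τ πm πi : Polynomial ℝ) (t : ℝ) (z : ℝ) : ℝ :=
  (1 + t * rhoInt α τ πm πm z) * πi.eval z - t * rhoInt α τ πi πm z * πm.eval z

/-- The weight is integrable at the left endpoint, because `α - 1/2 > -1`. -/
lemma intervalIntegrable_mul_gegenWeight {α : ℝ} (hα : -1/2 < α) {τ : Polynomial ℝ}
    (hτ : ∀ z ∈ Set.Icc (-1 : ℝ) 1, τ.eval z ≠ 0) (p q : Polynomial ℝ) {z : ℝ}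
    (hz : z ∈ Set.Ioo (-1 : ℝ) 1) :
    IntervalIntegrable (fun u => p.eval u * q.eval u * gegenWeight α τ u)
      MeasureTheory.volume (-1) z := by
  have hpow : IntervalIntegrable (fun u : ℝ => (u + 1) ^ (α - 1/2))
      MeasureTheory.volume (-1) z := by
    have h := (intervalIntegral.intervalIntegrable_rpow' (a := 0) (b := z + 1)
      (r := α - 1/2) (by linarith)).comp_add_right 1
    simpa using h
  have hcont : ContinuousOn
      (fun u : ℝ => p.eval u * q.eval u * (1 - u) ^ (α - 1/2) / (τ.eval u) ^ 2)
      (Set.uIcc (-1) z) := by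
    rw [Set.uIcc_of_le hz.1.le]
    refine ContinuousOn.div (ContinuousOn.mul (by fun_prop) ?_) (by fun_prop) ?_
    · refine ContinuousOn.rpow_const (by fun_prop) fun u hu => Or.inl ?_
      linarith [hu.2, hz.2]
    · intro u hu
      exact pow_ne_zero 2 (hτ u ⟨hu.1, hu.2.trans hz.2.le⟩)
  refine (hpow.continuousOn_mul hcont).congr fun u hu => ?_
  rw [Set.uIoc_of_le hz.1.le] at hu
  have h1 : 0 ≤ 1 - u := by linarith [hu.2, hz.2]
  have h2 : 0 ≤ u + 1 := by linarith [hu.1]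
  simp only [gegenWeight]
  rw [show 1 - u ^ 2 = (1 - u) * (u + 1) by ring, Real.mul_rpow h1 h2]
  ring

lemma hasDerivAt_gegenWeight (α : ℝ) {τ : Polynomial ℝ} {z : ℝ}
    (hz : z ∈ Set.Ioo (-1 : ℝ) 1) (hτ : τ.eval z ≠ 0) :
    HasDerivAt (gegenWeight α τ)
      (gegenWeight α τ z * (-(2 * α - 1) * z / (1 - z ^ 2)
        - 2 * (derivative τ).eval z / τ.eval z)) z := by
  have hq : 0 < 1 - z ^ 2 := by nlinarith [hz.1, hz.2]
  have hbase : HasDerivAt (fun u : ℝ => 1 - u ^ 2) (-(2 * z)) z := by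
    simpa using (hasDerivAt_pow 2 z).const_sub 1
  have h := (hbase.rpow_const (p := α - 1/2) (Or.inl hq.ne')).div
    ((τ.hasDerivAt z).pow 2) (pow_ne_zero 2 hτ)
  refine h.congr_deriv ?_
  rw [Real.rpow_sub_one hq.ne']
  simp only [gegenWeight, Pi.pow_apply]
  field_simp
  ring

lemma hasDerivAt_rhoInt {α : ℝ} (hα : -1/2 < α) {τ : Polynomial ℝ}
    (hτ : ∀ z ∈ Set.Icc (-1 : ℝ) 1, τ.eval z ≠ 0) (p q : Polynomial ℝ) {z : ℝ}
    (hz : z ∈ Set.Ioo (-1 : ℝ) 1) :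
    HasDerivAt (rhoInt α τ p q) (p.eval z * q.eval z * gegenWeight α τ z) z := by
  have hcont : ∀ u ∈ Set.Ioo (-1 : ℝ) 1,
      ContinuousAt (fun u => p.eval u * q.eval u * gegenWeight α τ u) u := fun u hu =>
    ((p.continuous.mul q.continuous).continuousAt).mul
      (hasDerivAt_gegenWeight α hu (hτ u ⟨hu.1.le, hu.2.le⟩)).continuousAt
  exact intervalIntegral.integral_hasDerivAt_right
    (intervalIntegrable_mul_gegenWeight hα hτ p q hz)
    (ContinuousAt.stronglyMeasurableAtFilter isOpen_Ioo hcont z hz) (hcont z hz)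

/-- The weighted Wronskian is an antiderivative of `(λ_i - λ_m) π_i π_m W` vanishing at `-1`. -/
lemma sub_mul_rhoInt_eq_wronskian {α : ℝ} (hα : -1/2 < α) {τ πi πm : Polynomial ℝ}
    {lami lamm : ℝ} (hτ : ∀ z ∈ Set.Icc (-1 : ℝ) 1, τ.eval z ≠ 0)
    (hi : ∀ z : ℝ, (1 - z ^ 2) *
        (τ.eval z * (derivative (derivative πi)).eval z
          - 2 * (derivative τ).eval z * (derivative πi).eval z
          + (derivative (derivative τ)).eval z * πi.eval z)
      - (2 * α + 1) * z * (τ.eval z * (derivative πi).eval z)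
      + (2 * α - 1) * z * ((derivative τ).eval z * πi.eval z)
      = lami * (τ.eval z * πi.eval z))
    (hm : ∀ z : ℝ, (1 - z ^ 2) *
        (τ.eval z * (derivative (derivative πm)).eval z
          - 2 * (derivative τ).eval z * (derivative πm).eval z
          + (derivative (derivative τ)).eval z * πm.eval z)
      - (2 * α + 1) * z * (τ.eval z * (derivative πm).eval z)
      + (2 * α - 1) * z * ((derivative τ).eval z * πm.eval z)
      = lamm * (τ.eval z * πm.eval z))
    {z : ℝ} (hz : z ∈ Set.Ioo (-1 : ℝ) 1) :
    (lami - lamm) * rhoInt α τ πi πm z = (1 - z ^ 2) * gegenWeight α τ z *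
      ((derivative πi).eval z * πm.eval z - πi.eval z * (derivative πm).eval z) := by
  set F : ℝ → ℝ := fun u => (1 - u ^ 2) ^ (α + 1/2) / (τ.eval u) ^ 2 *
    ((derivative πi).eval u * πm.eval u - πi.eval u * (derivative πm).eval u) with hF
  have hF_eq : ∀ u ∈ Set.Ioo (-1 : ℝ) 1, F u = (1 - u ^ 2) * gegenWeight α τ u *
      ((derivative πi).eval u * πm.eval u - πi.eval u * (derivative πm).eval u) := by
    intro u hu
    have hq : 0 < 1 - u ^ 2 := by nlinarith [hu.1, hu.2]
    simp only [hF, gegenWeight]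
    rw [show α + 1/2 = (α - 1/2) + 1 by ring, Real.rpow_add_one hq.ne']
    ring
  have hF_cont : ContinuousOn F (Set.Icc (-1) z) := by
    refine ContinuousOn.mul (ContinuousOn.div ?_ (by fun_prop) ?_) (by fun_prop)
    · exact ContinuousOn.rpow_const (by fun_prop) fun u _ => Or.inr (by linarith)
    · intro u hu
      exact pow_ne_zero 2 (hτ u ⟨hu.1, hu.2.trans hz.2.le⟩)
  have hF_deriv : ∀ u ∈ Set.Ioo (-1) z, HasDerivAt F
      ((lami - lamm) * (πi.eval u * πm.eval u * gegenWeight α τ u)) u := by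
    intro u hu
    have hu' : u ∈ Set.Ioo (-1 : ℝ) 1 := ⟨hu.1, hu.2.trans hz.2⟩
    have hq : 1 - u ^ 2 ≠ 0 := by nlinarith [hu'.1, hu'.2]
    have hτu : τ.eval u ≠ 0 := hτ u ⟨hu'.1.le, hu'.2.le⟩
    have hbase : HasDerivAt (fun u : ℝ => 1 - u ^ 2) (-(2 * u)) u := by
      simpa using (hasDerivAt_pow 2 u).const_sub 1
    have h := (hbase.mul (hasDerivAt_gegenWeight α hu' hτu)).mul
      ((((derivative πi).hasDerivAt u).mul (πm.hasDerivAt u)).sub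
        ((πi.hasDerivAt u).mul ((derivative πm).hasDerivAt u)))
    refine (h.congr_of_eventuallyEq ?_).congr_deriv ?_
    · filter_upwards [isOpen_Ioo.mem_nhds hu'] with v hv
      simpa using hF_eq v hv
    · simp only [Pi.mul_apply, Pi.sub_apply]
      field_simp
      linear_combination gegenWeight α τ u * πm.eval u * hi u
        - gegenWeight α τ u * πi.eval u * hm u
  have hint := intervalIntegral.integral_eq_sub_of_hasDerivAt_of_le hz.1.le hF_cont hF_deriv
    ((intervalIntegrable_mul_gegenWeight hα hτ πi πm hz).const_mul _)
  rw [intervalIntegral.integral_const_mul, hF_eq z hz] at hint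
  have hF_left : F (-1) = 0 := by
    simp [hF, Real.zero_rpow (show α + 2⁻¹ ≠ 0 by norm_num; linarith)]
  rw [hF_left, sub_zero] at hint
  exact hint

/-- the confluent Darboux transform `π_{m;i}` satisfies the cleared
eigenvalue equation of `T^{(α)}_{τ_m}` with the same eigenvalue `λ_i`. -/
theorem statement12 (α : ℝ) (hα : -1/2 < α) (τ πi πm : Polynomial ℝ)
    (lami lamm t : ℝ) (hne : lami ≠ lamm)
    (hτ0 : ∀ z ∈ Set.Icc (-1 : ℝ) 1, τ.eval z ≠ 0)
    (hi : (1 - X ^ 2) *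
        (τ * derivative (derivative πi) - 2 * derivative τ * derivative πi
          + derivative (derivative τ) * πi)
      - C (2 * α + 1) * X * (τ * derivative πi)
      + C (2 * α - 1) * X * (derivative τ * πi)
      = C lami * (τ * πi))
    (hm : (1 - X ^ 2) *
        (τ * derivative (derivative πm) - 2 * derivative τ * derivative πm
          + derivative (derivative τ) * πm)
      - C (2 * α + 1) * X * (τ * derivative πm)
      + C (2 * α - 1) * X * (derivative τ * πm)
      = C lamm * (τ * πm)) :
    ∀ z ∈ Set.Ioo (-1 : ℝ) 1,
      (1 - z ^ 2) *
          (tauCDT α τ πm t z * deriv (deriv (piCDT α τ πm πi t)) z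
            - 2 * deriv (tauCDT α τ πm t) z * deriv (piCDT α τ πm πi t) z
            + deriv (deriv (tauCDT α τ πm t)) z * piCDT α τ πm πi t z)
        - (2 * α + 1) * z * tauCDT α τ πm t z * deriv (piCDT α τ πm πi t) z
        + (2 * α - 1) * z * deriv (tauCDT α τ πm t) z * piCDT α τ πm πi t z
      = lami * tauCDT α τ πm t z * piCDT α τ πm πi t z := by
  have hi' : ∀ z : ℝ, _ := fun z => congrArg (Polynomial.eval z) hi
  have hm' : ∀ z : ℝ, _ := fun z => congrArg (Polynomial.eval z) hm
  simp only [eval_add, eval_sub, eval_mul, eval_pow, eval_one, eval_X, eval_C,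
    eval_ofNat] at hi' hm'
  have hτ_deriv : ∀ u ∈ Set.Ioo (-1 : ℝ) 1, HasDerivAt (tauCDT α τ πm t)
      ((derivative τ).eval u * (1 + t * rhoInt α τ πm πm u)
        + τ.eval u * (t * (πm.eval u * πm.eval u * gegenWeight α τ u))) u := fun u hu =>
    (τ.hasDerivAt u).mul (((hasDerivAt_rhoInt hα hτ0 πm πm hu).const_mul t).const_add 1)
  have hπ_deriv : ∀ u ∈ Set.Ioo (-1 : ℝ) 1, HasDerivAt (piCDT α τ πm πi t)
      ((1 + t * rhoInt α τ πm πm u) * (derivative πi).eval u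
        - t * rhoInt α τ πi πm u * (derivative πm).eval u) u := by
    intro u hu
    refine (((((hasDerivAt_rhoInt hα hτ0 πm πm hu).const_mul t).const_add 1).mul
      (πi.hasDerivAt u)).sub (((hasDerivAt_rhoInt hα hτ0 πi πm hu).const_mul t).mul
      (πm.hasDerivAt u))).congr_deriv ?_
    ring
  intro z hz
  have hq : 1 - z ^ 2 ≠ 0 := by nlinarith [hz.1, hz.2]
  have hτz : τ.eval z ≠ 0 := hτ0 z ⟨hz.1.le, hz.2.le⟩
  have hmm := ((hasDerivAt_rhoInt hα hτ0 πm πm hz).const_mul t).const_add 1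
  have him := (hasDerivAt_rhoInt hα hτ0 πi πm hz).const_mul t
  have hW := hasDerivAt_gegenWeight α hz hτz
  have hτ_deriv₂ := ((((derivative τ).hasDerivAt z).mul hmm).add ((τ.hasDerivAt z).mul
    ((((πm.hasDerivAt z).mul (πm.hasDerivAt z)).mul hW).const_mul t))).congr_of_eventuallyEq
    (Filter.eventually_of_mem (isOpen_Ioo.mem_nhds hz) fun u hu => (hτ_deriv u hu).deriv)
  have hπ_deriv₂ := ((hmm.mul ((derivative πi).hasDerivAt z)).sub
    (him.mul ((derivative πm).hasDerivAt z))).congr_of_eventuallyEq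
    (Filter.eventually_of_mem (isOpen_Ioo.mem_nhds hz) fun u hu => (hπ_deriv u hu).deriv)
  have hs := sub_mul_rhoInt_eq_wronskian hα hτ0 hi' hm' hz
  rw [hτ_deriv₂.deriv, hπ_deriv₂.deriv, (hτ_deriv z hz).deriv, (hπ_deriv z hz).deriv]
  have hV : (1 - z ^ 2) * τ.eval z * (gegenWeight α τ z * (-(2 * α - 1) * z / (1 - z ^ 2)
        - 2 * (derivative τ).eval z / τ.eval z))
      = gegenWeight α τ z * (-(2 * α - 1) * z * τ.eval z
        - 2 * (1 - z ^ 2) * (derivative τ).eval z) := by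
    field_simp
  simp only [tauCDT, piCDT, Pi.mul_apply]
  generalize gegenWeight α τ z * (-(2 * α - 1) * z / (1 - z ^ 2)
    - 2 * (derivative τ).eval z / τ.eval z) = V at hV ⊢
  linear_combination (1 + t * rhoInt α τ πm πm z) ^ 2 * hi' z
    - t * rhoInt α τ πi πm z * (1 + t * rhoInt α τ πm πm z) * hm' z
    + ((1 + t * rhoInt α τ πm πm z) * πi.eval z - t * rhoInt α τ πi πm z * πm.eval z)
      * t * πm.eval z ^ 2 * hV
    + t * (1 + t * rhoInt α τ πm πm z) * τ.eval z * πm.eval z * hs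
end

section
/- Let I ⊆ ℝ be an open interval, W, π_i, π_j, π_m : I → ℝ continuous, and t ∈ ℝ. Let ρ_{ij}, ρ_{mi}, ρ_{mj}, ρ_{mm} : I → ℝ be differentiable with ρ_{ij}' = π_i·π_j·W, ρ_{mi}' = π_m·π_i·W, ρ_{mj}' = π_m·π_j·W, and ρ_{mm}' = π_m·π_m·W on I. Define π_{m;i} = (1 + t·ρ_{mm})·π_i - t·ρ_{mi}·π_m and π_{m;j} = (1 + t·ρ_{mm})·π_j - t·ρ_{mj}·π_m. Then at every z ∈ I with 1 + t·ρ_{mm}(z) ≠ 0, the function ρ_{m;ij} := ρ_{ij} - t·ρ_{mi}·ρ_{mj}/(1 + t·ρ_{mm}) is differentiable with ρ_{m;ij}'(z) = π_{m;i}(z)·π_{m;j}(z)·W(z)/(1 + t·ρ_{mm}(z))². -/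
open Set

/-- closed form for the derivative of
`ρ_{m;ij} = ρ_{ij} - tρ_{mi}ρ_{mj}/(1 + tρ_{mm})`:
wherever `1 + tρ_{mm} ≠ 0`, one has `ρ_{m;ij}' = π_{m;i}π_{m;j}W/(1 + tρ_{mm})²`,
where `π_{m;a} = (1 + tρ_{mm})π_a - tρ_{ma}π_m`. -/
theorem statement13 (a b : ℝ) (hab : a < b)
    (W πi πj πm ρij ρmi ρmj ρmm : ℝ → ℝ) (t : ℝ)
    (hW : ContinuousOn W (Ioo a b)) (hπi : ContinuousOn πi (Ioo a b))
    (hπj : ContinuousOn πj (Ioo a b)) (hπm : ContinuousOn πm (Ioo a b))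
    (hρij : ∀ z ∈ Ioo a b, HasDerivAt ρij (πi z * πj z * W z) z)
    (hρmi : ∀ z ∈ Ioo a b, HasDerivAt ρmi (πm z * πi z * W z) z)
    (hρmj : ∀ z ∈ Ioo a b, HasDerivAt ρmj (πm z * πj z * W z) z)
    (hρmm : ∀ z ∈ Ioo a b, HasDerivAt ρmm (πm z * πm z * W z) z) :
    ∀ z ∈ Ioo a b, 1 + t * ρmm z ≠ 0 →
      HasDerivAt (fun x => ρij x - t * ρmi x * ρmj x / (1 + t * ρmm x))
        (((1 + t * ρmm z) * πi z - t * ρmi z * πm z)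
          * ((1 + t * ρmm z) * πj z - t * ρmj z * πm z)
          * W z / (1 + t * ρmm z) ^ 2) z := by
  intro z hz hne
  have h := (hρij z hz).sub ((((hρmi z hz).const_mul t).mul (hρmj z hz)).div
    (((hρmm z hz).const_mul t).const_add 1) hne)
  refine h.congr_deriv ?_
  simp only [Pi.mul_apply]
  field_simp
  ring
end

section
/- Let ℓ ∈ ℕ and α = ℓ + 1/2, t ∈ ℝ, let τ ∈ ℝ[X] be positive on [-1,1], and let {π_i}_{i∈ℕ} be polynomials satisfying: (orthogonality) ∫_{-1}^{1} π_i·π_j·W^{(α)}_τ = 0 for i ≠ j with ν_i := ∫_{-1}^{1} π_i²·W^{(α)}_τ > 0, and (completeness) every measurable g : [-1,1] → ℝ with ∫_{-1}^{1} g²·W^{(α)}_τ < ∞ and ∫_{-1}^{1} g·π_i·W^{(α)}_τ = 0 for all i ∈ ℕ vanishes almost everywhere on [-1,1]; here W^{(α)}_τ(z) = (1-z²)^{α-1/2}/τ(z)². Fix m ∈ ℕ with 1 + t·ν_m > 0, set ρ_{ab}(z) = ∫_{-1}^{z} π_a·π_b·W^{(α)}_τ, τ_m = τ·(1 + t·ρ_{mm}),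 π_{m;i} = (1 + t·ρ_{mm})·π_i - t·ρ_{im}·π_m, and W^{(α)}_{τ_m}(z) = (1-z²)^{α-1/2}/τ_m(z)². Then {π_{m;i}}_{i∈ℕ} is complete for W^{(α)}_{τ_m}: every measurable h : [-1,1] → ℝ with ∫_{-1}^{1} h²·W^{(α)}_{τ_m} < ∞ and ∫_{-1}^{1} h·π_{m;i}·W^{(α)}_{τ_m} = 0 for all i ∈ ℕ vanishes almost everywhere on [-1,1]. -/
open MeasureTheory

/-- The weight `W^{(α)}_τ(z) = (1-z²)^ℓ/τ(z)²` for `α = ℓ + 1/2`. -/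
noncomputable def gegenWeightNat (ℓ : ℕ) (τ : Polynomial ℝ) (z : ℝ) : ℝ :=
  (1 - z ^ 2) ^ ℓ / (τ.eval z) ^ 2

/-- `ρ_{ab}(z) = ∫_{-1}^z π_a π_b W^{(α)}_τ`. -/
noncomputable def rhoIntNat (ℓ : ℕ) (τ : Polynomial ℝ) (π : ℕ → Polynomial ℝ)
    (a b : ℕ) (z : ℝ) : ℝ :=
  ∫ u in (-1 : ℝ)..z, (π a).eval u * (π b).eval u * gegenWeightNat ℓ τ u

/-- The transformed τ-function `τ_m = τ(1 + tρ_{mm})`. -/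
noncomputable def tauCDTNat (ℓ : ℕ) (τ : Polynomial ℝ) (π : ℕ → Polynomial ℝ)
    (m : ℕ) (t : ℝ) (z : ℝ) : ℝ :=
  τ.eval z * (1 + t * rhoIntNat ℓ τ π m m z)

/-- The transformed polynomials `π_{m;i} = (1 + tρ_{mm})π_i - tρ_{im}π_m`. -/
noncomputable def piCDTNat (ℓ : ℕ) (τ : Polynomial ℝ) (π : ℕ → Polynomial ℝ)
    (m i : ℕ) (t : ℝ) (z : ℝ) : ℝ :=
  (1 + t * rhoIntNat ℓ τ π m m z) * (π i).eval z
    - t * rhoIntNat ℓ τ π i m z * (π m).eval z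

/-- The transformed weight `W^{(α)}_{τ_m} = (1-z²)^ℓ/τ_m²`. -/
noncomputable def gegenWeightCDTNat (ℓ : ℕ) (τ : Polynomial ℝ) (π : ℕ → Polynomial ℝ)
    (m : ℕ) (t : ℝ) (z : ℝ) : ℝ :=
  (1 - z ^ 2) ^ ℓ / (tauCDTNat ℓ τ π m t z) ^ 2

/-- Integration by parts for primitives of interval integrable functions, the first vanishing at
the left end and the second at the right end. -/
theorem intervalIntegral_primitive_mul_eq_neg {u v : ℝ → ℝ} {a b : ℝ}
    (hu : IntervalIntegrable u volume a b) (hv : IntervalIntegrable v volume a b) :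
    ∫ x in a..b, (∫ y in a..x, u y) * v x = -∫ x in a..b, u x * ∫ y in b..x, v y := by
  have hU := hu.absolutelyContinuousOnInterval_intervalIntegral (c := a) (by simp)
  have hV := hv.absolutelyContinuousOnInterval_intervalIntegral (c := b) (by simp)
  have key := hU.integral_mul_deriv_eq_deriv_mul hV
  rw [intervalIntegral.integral_same, intervalIntegral.integral_same, mul_zero, zero_mul,
    sub_zero, zero_sub] at key
  refine Eq.trans ?_ (key.trans ?_)
  · refine intervalIntegral.integral_congr_ae ?_
    filter_upwards [hv.ae_hasDerivAt_integral] with x hx hxm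
    rw [(hx (Set.uIoc_subset_uIcc hxm) b (by simp)).deriv]
  · congr 1
    refine intervalIntegral.integral_congr_ae ?_
    filter_upwards [hu.ae_hasDerivAt_integral] with x hx hxm
    rw [(hx (Set.uIoc_subset_uIcc hxm) a (by simp)).deriv]

/-- The linear equation `φ' s + φ s' = 0` with `φ(b) = 0` and nonvanishing `s = c + t ∫ r` has only
the zero solution among the absolutely continuous functions `φ = ∫ v`. -/
theorem primitive_eq_zero_of_ae_mul_eq {v r : ℝ → ℝ} {a b c t : ℝ}
    (hv : IntervalIntegrable v volume a b) (hr : IntervalIntegrable r volume a b)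
    (hs : ∀ x ∈ Set.uIcc a b, c + t * ∫ y in a..x, r y ≠ 0)
    (hode : ∀ᵐ x, x ∈ Set.uIcc a b →
      v x * (c + t * ∫ y in a..x, r y) = -t * (∫ y in b..x, v y) * r x) :
    ∀ x ∈ Set.uIcc a b, ∫ y in b..x, v y = 0 := by
  have hR := hr.absolutelyContinuousOnInterval_intervalIntegral (c := a) (by simp)
  have hV := hv.absolutelyContinuousOnInterval_intervalIntegral (c := b) (by simp)
  obtain ⟨C, hC⟩ := ((hV.const_mul c).add
    ((hV.fun_mul hR).const_mul t)).const_of_ae_hasDerivAt_zero (by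
      filter_upwards [hv.ae_hasDerivAt_integral, hr.ae_hasDerivAt_integral, hode]
        with x hxv hxr hx hxm
      have dv := hxv hxm b (by simp)
      have dr := hxr hxm a (by simp)
      refine ((dv.const_mul c).add ((dv.mul dr).const_mul t)).congr_deriv ?_
      linear_combination hx hxm)
  have hC0 : C = 0 := by simpa using (hC b (by simp)).symm
  intro x hx
  have h := hC x hx
  simp only [Pi.add_apply, hC0] at h
  refine (mul_eq_zero.mp ?_).resolve_right (hs x hx)
  linear_combination h

/-- If `f² w` is integrable for a nonnegative continuous weight, so is `f w`. -/
theorem integrableOn_mul_weight_of_sq {f w : ℝ → ℝ} {K : Set ℝ} (hK : IsCompact K)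
    (hf : AEStronglyMeasurable f (volume.restrict K)) (hw : ContinuousOn w K)
    (hw0 : ∀ x ∈ K, 0 ≤ w x) (hfw : IntegrableOn (fun x => f x ^ 2 * w x) K) :
    IntegrableOn (fun x => f x * w x) K := by
  refine (hfw.add (hw.integrableOn_compact hK)).mono'
    (hf.mul (hw.aestronglyMeasurable hK.measurableSet)) ?_
  filter_upwards [ae_restrict_mem hK.measurableSet] with x hx
  have h0 := hw0 x hx
  rw [norm_mul, Real.norm_eq_abs, Real.norm_eq_abs, abs_of_nonneg h0, Pi.add_apply]
  nlinarith [mul_nonneg h0 (sq_nonneg (|f x| - 1)), mul_nonneg h0 (sq_nonneg (f x)), sq_abs (f x)]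

/-- Confluent Darboux transformations preserve completeness, for continuous functions and a
continuous nonnegative weight on a compact interval. The function `f` stands for `h / s`. -/
theorem ae_eq_zero_of_confluentDarboux {ι : Type*} {a b t : ℝ} (hab : a ≤ b) {w : ℝ → ℝ}
    (hw : ContinuousOn w (Set.Icc a b)) (hw0 : ∀ x ∈ Set.Icc a b, 0 ≤ w x)
    {p : ι → ℝ → ℝ} (hp : ∀ i, ContinuousOn (p i) (Set.Icc a b)) (m : ι)
    (hcomplete : ∀ g : ℝ → ℝ, AEStronglyMeasurable g (volume.restrict (Set.Icc a b)) →
      IntegrableOn (fun z => g z ^ 2 * w z) (Set.Icc a b) →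
      (∀ i, ∫ z in a..b, g z * p i z * w z = 0) →
      ∀ᵐ z ∂(volume.restrict (Set.Icc a b)), g z = 0)
    {s : ℝ → ℝ} (hs : ∀ x, s x = 1 + t * ∫ y in a..x, p m y * p m y * w y)
    (hs0 : ∀ x ∈ Set.Icc a b, s x ≠ 0)
    {f : ℝ → ℝ} (hf : AEStronglyMeasurable f (volume.restrict (Set.Icc a b)))
    (hfw : IntegrableOn (fun z => f z ^ 2 * w z) (Set.Icc a b))
    (horth : ∀ i, ∫ z in a..b,
      f z * (p i z - t * (∫ y in a..z, p i y * p m y * w y) * p m z / s z) * w z = 0) :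
    ∀ᵐ z ∂(volume.restrict (Set.Icc a b)), f z = 0 := by
  have hI : Set.uIcc a b = Set.Icc a b := Set.uIcc_of_le hab
  have ii {u : ℝ → ℝ} (hu : IntegrableOn u (Set.Icc a b)) : IntervalIntegrable u volume a b :=
    (intervalIntegrable_iff_integrableOn_Icc_of_le hab).2 hu
  have hr (i j : ι) : ContinuousOn (fun y => p i y * p j y * w y) (Set.Icc a b) :=
    ((hp i).mul (hp j)).mul hw
  have hri (i j : ι) : IntervalIntegrable (fun y => p i y * p j y * w y) volume a b :=
    ii ((hr i j).integrableOn_compact isCompact_Icc)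
  have hρ (i j : ι) : ContinuousOn (fun x => ∫ y in a..x, p i y * p j y * w y) (Set.Icc a b) := by
    have := ((hri i j).absolutelyContinuousOnInterval_intervalIntegral (c := a) (by simp))
    exact hI ▸ this.continuousOn
  have hsc : ContinuousOn s (Set.Icc a b) := by
    rw [funext hs]
    exact continuousOn_const.add (continuousOn_const.mul (hρ m m))
  have hfi := integrableOn_mul_weight_of_sq isCompact_Icc hf hw hw0 hfw
  have hfc {u : ℝ → ℝ} (hu : ContinuousOn u (Set.Icc a b)) :
      IntervalIntegrable (fun z => f z * w z * u z) volume a b :=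
    (ii hfi).mul_continuousOn (hI ▸ hu)
  set v : ℝ → ℝ := fun z => f z * w z * (p m z / s z) with hv
  have hvi : IntervalIntegrable v volume a b := hfc ((hp m).div hsc hs0)
  set φ : ℝ → ℝ := fun x => ∫ y in b..x, v y with hφ
  have hφc : ContinuousOn φ (Set.Icc a b) := by
    have := (hvi.absolutelyContinuousOnInterval_intervalIntegral (c := b) (by simp))
    exact hI ▸ this.continuousOn
  have hψc : ContinuousOn (fun x => t * φ x * p m x) (Set.Icc a b) :=
    (continuousOn_const.mul hφc).mul (hp m)
  have hg : ∀ᵐ z ∂(volume.restrict (Set.Icc a b)), f z + t * φ z * p m z = 0 := by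
    refine hcomplete _ (hf.add (hψc.aestronglyMeasurable measurableSet_Icc)) ?_ fun i => ?_
    · have h1 := hfi.mul_continuousOn hψc isCompact_Icc
      have h2 := ((hψc.pow 2).mul hw).integrableOn_compact (μ := volume) isCompact_Icc
      refine ((hfw.add (h1.const_mul 2)).add h2).congr (Filter.Eventually.of_forall fun z => ?_)
      simp only [Pi.add_apply, Pi.mul_apply, Pi.pow_apply]
      ring
    · have h1 : IntervalIntegrable (fun z => f z * w z * p i z) volume a b := hfc (hp i)
      have h2 : IntervalIntegrable (fun z => (∫ y in a..z, p i y * p m y * w y) * v z)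
          volume a b := hvi.continuousOn_mul (hI ▸ hρ i m)
      have h3 : IntervalIntegrable (fun z => p i z * p m z * w z * φ z) volume a b :=
        (hri i m).mul_continuousOn (hI ▸ hφc)
      have hparts := intervalIntegral_primitive_mul_eq_neg (hri i m) hvi
      have ho : ∫ z in a..b, (f z * w z * p i z -
          t * ((∫ y in a..z, p i y * p m y * w y) * v z)) = 0 := by
        rw [← horth i]
        refine intervalIntegral.integral_congr fun z _ => ?_
        simp only [hv]
        ring
      rw [intervalIntegral.integral_sub h1 (h2.const_mul t),
        intervalIntegral.integral_const_mul, hparts] at ho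
      calc ∫ z in a..b, (f z + t * φ z * p m z) * p i z * w z
          = ∫ z in a..b, (f z * w z * p i z + t * (p i z * p m z * w z * φ z)) :=
            intervalIntegral.integral_congr fun z _ => by ring
        _ = 0 := by
            rw [intervalIntegral.integral_add h1 (h3.const_mul t),
              intervalIntegral.integral_const_mul]
            linear_combination ho
  have hφ0 : ∀ x ∈ Set.uIcc a b, φ x = 0 := by
    refine primitive_eq_zero_of_ae_mul_eq (c := 1) (t := t) hvi (hri m m)
      (fun x hx => by rw [← hs]; exact hs0 x (hI ▸ hx)) ?_
    filter_upwards [(ae_restrict_iff' measurableSet_Icc).1 hg] with x hx hxm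
    rw [hI] at hxm
    have hsx := hs0 x hxm
    rw [← hs]
    change f x * w x * (p m x / s x) * s x = -t * φ x * (p m x * p m x * w x)
    field_simp
    linear_combination p m x * w x * hx hxm
  filter_upwards [hg, ae_restrict_mem measurableSet_Icc] with z hz hzm
  simpa [hφ0 z (hI ▸ hzm)] using hz

/-- a confluent Darboux transformation preserves completeness.
If `{π_i}` is an orthogonal family, complete for the weight `W^{(α)}_τ` on
`[-1,1]` (`α = ℓ + 1/2`), and `1 + tν_m > 0`, then the transformed family
`{π_{m;i}}` is complete for the transformed weight `W^{(α)}_{τ_m}`. -/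
theorem statement16 (ℓ : ℕ) (t : ℝ) (τ : Polynomial ℝ) (π : ℕ → Polynomial ℝ) (m : ℕ)
    (hτpos : ∀ z ∈ Set.Icc (-1 : ℝ) 1, 0 < τ.eval z)
    (horth : ∀ i j : ℕ, i ≠ j →
      (∫ z in (-1 : ℝ)..1, (π i).eval z * (π j).eval z * gegenWeightNat ℓ τ z) = 0)
    (hnorm : ∀ i : ℕ,
      0 < ∫ z in (-1 : ℝ)..1, ((π i).eval z) ^ 2 * gegenWeightNat ℓ τ z)
    (hcomplete : ∀ g : ℝ → ℝ, Measurable g →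
      IntegrableOn (fun z => (g z) ^ 2 * gegenWeightNat ℓ τ z) (Set.Icc (-1 : ℝ) 1) →
      (∀ i : ℕ,
        (∫ z in (-1 : ℝ)..1, g z * (π i).eval z * gegenWeightNat ℓ τ z) = 0) →
      ∀ᵐ z ∂(volume.restrict (Set.Icc (-1 : ℝ) 1)), g z = 0)
    (hm : 0 < 1 + t * rhoIntNat ℓ τ π m m 1) :
    ∀ h : ℝ → ℝ, Measurable h →
      IntegrableOn (fun z => (h z) ^ 2 * gegenWeightCDTNat ℓ τ π m t z)
        (Set.Icc (-1 : ℝ) 1) →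
      (∀ i : ℕ,
        (∫ z in (-1 : ℝ)..1, h z * piCDTNat ℓ τ π m i t z
          * gegenWeightCDTNat ℓ τ π m t z) = 0) →
      ∀ᵐ z ∂(volume.restrict (Set.Icc (-1 : ℝ) 1)), h z = 0 := by
  intro h hh hint horthh
  have hw : ContinuousOn (gegenWeightNat ℓ τ) (Set.Icc (-1) 1) := by
    refine ContinuousOn.div (by fun_prop) (τ.continuous.pow 2).continuousOn fun z hz => ?_
    exact pow_ne_zero 2 (hτpos z hz).ne'
  have hw0 : ∀ z ∈ Set.Icc (-1 : ℝ) 1, 0 ≤ gegenWeightNat ℓ τ z := fun z hz =>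
    div_nonneg (pow_nonneg (by nlinarith [hz.1, hz.2]) ℓ) (sq_nonneg _)
  have hrc : ContinuousOn (fun y => (π m).eval y * (π m).eval y * gegenWeightNat ℓ τ y)
      (Set.Icc (-1) 1) := ((π m).continuous.mul (π m).continuous).continuousOn.mul hw
  have hri : IntervalIntegrable (fun y => (π m).eval y * (π m).eval y * gegenWeightNat ℓ τ y)
      volume (-1) 1 := hrc.intervalIntegrable_of_Icc (by norm_num)
  set s : ℝ → ℝ := fun z => 1 + t * rhoIntNat ℓ τ π m m z with hs
  have hs0 : ∀ z ∈ Set.Icc (-1 : ℝ) 1, 0 < s z := by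
    intro z hz
    have hr0 : ∀ y ∈ Set.Icc (-1 : ℝ) 1,
        0 ≤ (π m).eval y * (π m).eval y * gegenWeightNat ℓ τ y :=
      fun y hy => mul_nonneg (mul_self_nonneg _) (hw0 y hy)
    have h0 : 0 ≤ rhoIntNat ℓ τ π m m z :=
      intervalIntegral.integral_nonneg hz.1 fun y hy => hr0 y ⟨hy.1, hy.2.trans hz.2⟩
    have h1 : rhoIntNat ℓ τ π m m z ≤ rhoIntNat ℓ τ π m m 1 := by
      refine intervalIntegral.integral_mono_interval le_rfl hz.1 hz.2 ?_ hri
      filter_upwards [ae_restrict_mem measurableSet_Ioc] with y hy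
      exact hr0 y (Set.Ioc_subset_Icc_self hy)
    rcases le_total 0 t with ht | ht
    · exact add_pos_of_pos_of_nonneg one_pos (mul_nonneg ht h0)
    · exact hm.trans_le (by simpa [hs] using mul_le_mul_of_nonpos_left h1 ht)
  have hsc : ContinuousOn s (Set.Icc (-1) 1) := by
    have := (hri.absolutelyContinuousOnInterval_intervalIntegral (c := -1) (by simp)).continuousOn
    rw [Set.uIcc_of_le (by norm_num)] at this
    exact continuousOn_const.add (continuousOn_const.mul this)
  have hweight (z : ℝ) :
      gegenWeightCDTNat ℓ τ π m t z = gegenWeightNat ℓ τ z / s z ^ 2 := by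
    simp only [gegenWeightCDTNat, tauCDTNat, gegenWeightNat, hs, mul_pow, div_div]
  have key := ae_eq_zero_of_confluentDarboux (a := -1) (b := 1) (t := t) (by norm_num) hw hw0
    (p := fun i z => (π i).eval z) (fun i => (π i).continuousOn) m
    (fun g hg hgi hgo => ?_) (s := s) (fun _ => rfl) (fun z hz => (hs0 z hz).ne')
    (f := fun z => h z / s z) ?_ ?_ fun i => ?_
  · filter_upwards [key, ae_restrict_mem measurableSet_Icc] with z hz hzm
    exact (div_eq_zero_iff.mp hz).resolve_right (hs0 z hzm).ne'
  · have hmk := hg.ae_eq_mk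
    have := hcomplete (hg.mk g) hg.stronglyMeasurable_mk.measurable
      (hgi.congr (by filter_upwards [hmk] with z hz; rw [hz])) fun i => by
        rw [← hgo i]
        refine intervalIntegral.integral_congr_ae ?_
        filter_upwards [(ae_restrict_iff' measurableSet_Icc).1 hmk] with z hz hzm
        rw [Set.uIoc_of_le (by norm_num)] at hzm
        rw [hz (Set.Ioc_subset_Icc_self hzm)]
    filter_upwards [hmk, this] with z hz hz0
    rw [hz, hz0]
  · exact (hh.aemeasurable.div (hsc.aemeasurable measurableSet_Icc)).aestronglyMeasurable
  · refine hint.congr (Filter.Eventually.of_forall fun z => ?_)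
    beta_reduce
    rw [hweight, div_pow, mul_div_assoc', div_mul_eq_mul_div]
  · rw [← horthh i]
    refine intervalIntegral.integral_congr fun z hz => ?_
    rw [Set.uIcc_of_le (by norm_num)] at hz
    have hsz := (hs0 z hz).ne'
    have hpi : piCDTNat ℓ τ π m i t z
        = s z * (π i).eval z - t * rhoIntNat ℓ τ π i m z * (π m).eval z := rfl
    simp only [hweight, hpi, rhoIntNat]
    field_simp
end
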